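/- arXiv:1805.03488 — 7 statements merged into one kernel-verified Lean document; each statement's English description precedes it below -/
import Mathlib

section
/- Every finite simple graph G on n ≥ 1 vertices of degeneracy at most d admits a block vertex ordering of degeneracy at most 4d and length at most ⌊log₂ n⌋ + 1. -/
/-- A vertex ordering of a finite simple graph is represented by an injective map `σ : V → ℕ`.
The ordering `σ` has degeneracy at most `d` if every vertex `v` has at most `d` neighbors `u`
with `σ u < σ v`. -/
def OrderingDegenLE {V : Type} [Fintype V] [DecidableEq V] (G : SimpleGraph V)
    [DecidableRel G.Adj] (σ : V → ℕ) (d : ℕ) : Prop :=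
  ∀ v : V, ((G.neighborFinset v).filter fun u => σ u < σ v).card ≤ d

/-- The degeneracy of `G` is at most `d` if some vertex ordering of `G` has degeneracy
at most `d`. -/
def DegeneracyLE {V : Type} [Fintype V] [DecidableEq V] (G : SimpleGraph V)
    [DecidableRel G.Adj] (d : ℕ) : Prop :=
  ∃ σ : V → ℕ, Function.Injective σ ∧ OrderingDegenLE G σ d

theorem degree_sum_bound {V : Type} [Fintype V] [DecidableEq V] (G : SimpleGraph V)
    [DecidableRel G.Adj] (σ : V → ℕ) (d : ℕ) (hσ : Function.Injective σ)
    (h : OrderingDegenLE G σ d) (S : Finset V) :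
    ∑ v ∈ S, (S.filter fun u => G.Adj v u).card ≤ 2 * d * S.card := by
  have hlow : ∑ v ∈ S, (S.filter fun u => G.Adj v u ∧ σ u < σ v).card ≤ d * S.card := by
    rw [mul_comm, ← smul_eq_mul]
    refine Finset.sum_le_card_nsmul _ _ _ fun v _ => le_trans (Finset.card_le_card ?_) (h v)
    intro u hu
    simp only [Finset.mem_filter, SimpleGraph.mem_neighborFinset] at hu ⊢
    exact hu.2
  have hsw : ∑ v ∈ S, (S.filter fun u => G.Adj v u ∧ σ v < σ u).card
      = ∑ v ∈ S, (S.filter fun u => G.Adj v u ∧ σ u < σ v).card := by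
    have := Finset.sum_card_bipartiteAbove_eq_sum_card_bipartiteBelow
      (s := S) (t := S) (fun v u => G.Adj v u ∧ σ v < σ u)
    simp only [Finset.bipartiteAbove, Finset.bipartiteBelow] at this
    rw [this]
    simp only [G.adj_comm]
  have hle : ∑ v ∈ S, (S.filter fun u => G.Adj v u).card
      ≤ ∑ v ∈ S, ((S.filter fun u => G.Adj v u ∧ σ u < σ v).card
        + (S.filter fun u => G.Adj v u ∧ σ v < σ u).card) := by
    refine Finset.sum_le_sum fun v _ => le_trans (Finset.card_le_card ?_) (Finset.card_union_le _ _)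
    intro u hu
    simp only [Finset.mem_filter, Finset.mem_union] at hu ⊢
    have hne : σ u ≠ σ v := fun e => hu.2.ne (hσ e).symm
    rcases lt_or_gt_of_ne hne with h1 | h1
    · exact Or.inl ⟨hu.1, hu.2, h1⟩
    · exact Or.inr ⟨hu.1, hu.2, h1⟩
  rw [Finset.sum_add_distrib, hsw] at hle
  nlinarith

theorem bad_bound {V : Type} [Fintype V] [DecidableEq V] (G : SimpleGraph V)
    [DecidableRel G.Adj] (σ : V → ℕ) (d : ℕ) (hσ : Function.Injective σ)
    (h : OrderingDegenLE G σ d) (S : Finset V) (hS : S.Nonempty) :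
    2 * (S.filter fun v => 4 * d < (S.filter fun u => G.Adj v u).card).card < S.card := by
  have h1 := degree_sum_bound G σ d hσ h S
  set T := S.filter fun v => 4 * d < (S.filter fun u => G.Adj v u).card with hT
  have h2 : T.card • (4 * d + 1) ≤ ∑ v ∈ T, (S.filter fun u => G.Adj v u).card := by
    refine Finset.card_nsmul_le_sum _ _ _ fun v hv => ?_
    exact (Finset.mem_filter.1 hv).2
  have h3 : ∑ v ∈ T, (S.filter fun u => G.Adj v u).card
      ≤ ∑ v ∈ S, (S.filter fun u => G.Adj v u).card :=
    Finset.sum_le_sum_of_subset (Finset.filter_subset _ _)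
  rw [smul_eq_mul] at h2
  have hp := hS.card_pos
  by_contra hc
  push Not at hc
  nlinarith [Nat.mul_le_mul_left (2 * d) hc]

theorem block_aux {V : Type} [Fintype V] [DecidableEq V] (G : SimpleGraph V)
    [DecidableRel G.Adj] (σ : V → ℕ) (d : ℕ) (hσ : Function.Injective σ)
    (h : OrderingDegenLE G σ d) (S : Finset V) (hS : S.Nonempty) :
    ∃ (ℓ : ℕ) (β : V → ℕ), ℓ ≤ Nat.log 2 S.card + 1 ∧ (∀ v ∈ S, β v < ℓ) ∧
      (∀ i, i < ℓ → ∃ v ∈ S, β v = i) ∧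
      (∀ v ∈ S, (S.filter fun u => G.Adj v u ∧ β u ≤ β v).card ≤ 4 * d) := by
  induction S using Finset.strongInduction with
  | H S ih =>
    have hb := bad_bound G σ d hσ h S hS
    set T := S.filter fun v => 4 * d < (S.filter fun u => G.Adj v u).card with hT
    have hTS : T ⊆ S := Finset.filter_subset _ _
    have hgood : ∀ v ∈ S, v ∉ T → (S.filter fun u => G.Adj v u).card ≤ 4 * d := by
      intro v hv hvT
      by_contra hc
      exact hvT (Finset.mem_filter.2 ⟨hv, not_le.1 hc⟩)
    obtain ⟨w, hwS, hwT⟩ : ∃ w ∈ S, w ∉ T := Finset.exists_mem_notMem_of_card_lt_card (by omega)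
    have key : ∀ (v : V) (p : V → Prop) [DecidablePred p],
        (S.filter fun u => G.Adj v u ∧ p u).card ≤ (S.filter fun u => G.Adj v u).card := by
      intro v p _
      refine Finset.card_le_card fun u hu => ?_
      simp only [Finset.mem_filter] at hu ⊢
      exact ⟨hu.1, hu.2.1⟩
    rcases T.eq_empty_or_nonempty with hE | hN
    · refine ⟨1, fun _ => 0, by omega, by simp, fun i hi => ⟨w, hwS, (Nat.lt_one_iff.1 hi).symm⟩, fun v hv => ?_⟩
      exact (key v _).trans (hgood v hv (by simp [hE]))
    · obtain ⟨ℓ, β, h1, h2, h3, h4⟩ := ih T ⟨hTS, fun hc => hwT (hc hwS)⟩ hN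
      refine ⟨ℓ + 1, fun v => if v ∈ T then β v else ℓ, ?_, ?_, ?_, ?_⟩
      · have e : Nat.log 2 (T.card * 2) = Nat.log 2 T.card + 1 :=
          Nat.log_mul_base (by norm_num) hN.card_pos.ne'
        have m : Nat.log 2 (T.card * 2) ≤ Nat.log 2 S.card := Nat.log_mono_right (by omega)
        omega
      · intro v hv
        by_cases hvT : v ∈ T
        · have := h2 v hvT
          simp only [hvT, if_true]
          omega
        · simp [hvT]
      · intro i hi
        rcases Nat.lt_succ_iff_lt_or_eq.1 hi with hi | hi
        · obtain ⟨v, hv, e⟩ := h3 i hi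
          exact ⟨v, hTS hv, by simp [hv, e]⟩
        · exact ⟨w, hwS, by simp [hwT, hi]⟩
      · intro v hv
        by_cases hvT : v ∈ T
        · refine le_trans (Finset.card_le_card fun u hu => ?_) (h4 v hvT)
          simp only [Finset.mem_filter, hvT, if_true] at hu
          obtain ⟨_, ha, hl⟩ := hu
          have := h2 v hvT
          by_cases huT : u ∈ T
          · simp only [huT, if_true] at hl
            exact Finset.mem_filter.2 ⟨huT, ha, hl⟩
          · simp only [huT, if_false] at hl
            omega
        · exact (key v _).trans (hgood v hv hvT)

/-- Every graph on `n ≥ 1` vertices of degeneracy at most `d` admits a block vertex ordering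
(an ordered partition into blocks, represented by the block-index function `β : V → ℕ`,
with all `ℓ` blocks nonempty) of degeneracy at most `4d` (every vertex has at most `4d`
neighbors in its own or smaller blocks) and length at most `⌊log₂ n⌋ + 1`. -/
theorem stmt1 {V : Type} [Fintype V] [DecidableEq V] (G : SimpleGraph V) [DecidableRel G.Adj]
    (n d : ℕ) (hn : n = Fintype.card V) (hpos : 1 ≤ n) (hdeg : DegeneracyLE G d) :
    ∃ (ℓ : ℕ) (β : V → ℕ),
      ℓ ≤ Nat.log 2 n + 1 ∧
      (∀ v, β v < ℓ) ∧
      (∀ i, i < ℓ → ∃ v, β v = i) ∧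
      (∀ v : V, ((G.neighborFinset v).filter fun u => β u ≤ β v).card ≤ 4 * d) := by
  obtain ⟨σ, hσ, h⟩ := hdeg
  subst hn
  have hne : (Finset.univ : Finset V).Nonempty := Finset.card_pos.1 hpos
  obtain ⟨ℓ, β, h1, h2, h3, h4⟩ := block_aux G σ d hσ h Finset.univ hne
  refine ⟨ℓ, β, h1, fun v => h2 v (Finset.mem_univ v), fun i hi => ?_, fun v => ?_⟩
  · obtain ⟨v, _, e⟩ := h3 i hi
    exact ⟨v, e⟩
  · refine le_trans (Finset.card_le_card fun u hu => ?_) (h4 v (Finset.mem_univ v))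
    simpa using hu
end

section
/- Let r ≥ 1 and d ≥ 1 be integers, let G be a finite simple graph, and let S be a nonempty subset of V(G) such that bconn_r(S,v) > 6rd³ for every v ∈ S. Then G admits a depth-(r−1) topological minor with edge density strictly larger than d. -/
/-- `BConnGE G S u r m` holds if there is a family of `m` paths in `G`, each of length at
most `r`, starting in `u`, ending in a vertex of `S` different from `u`, with all internal
vertices outside `S`, and pairwise sharing only the vertex `u`. -/
def BConnGE {V : Type} (G : SimpleGraph V) (S : Set V) (u : V) (r m : ℕ) : Prop :=
  ∃ (t : Fin m → V) (P : ∀ i, G.Walk u (t i)),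
    (∀ i, (P i).IsPath) ∧
    (∀ i, (P i).length ≤ r) ∧
    (∀ i, t i ∈ S ∧ t i ≠ u) ∧
    (∀ i, ∀ w ∈ (P i).support, w ≠ u → w ≠ t i → w ∉ S) ∧
    (∀ i j, i ≠ j → ∀ w ∈ (P i).support, w ∈ (P j).support → w = u)

/-- The back-connectivity `bconn_r(S,u)`: the maximum cardinality of a family of paths as in
`BConnGE`. -/
noncomputable def bconn {V : Type} (G : SimpleGraph V) (S : Set V) (u : V) (r : ℕ) : ℕ :=
  sSup {m : ℕ | BConnGE G S u r m}

/-- `G` admits a depth-`r` topological minor `H` (witnessed by a topological minor model: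
branch vertices `f` and internally disjoint paths of length at most `2r+1` for the edges
of `H`, internally avoiding all branch vertices) whose edge density `|E(H)|/|V(H)|`
is strictly larger than `d`. -/
def HasDepthTopMinorDensityGT {V : Type} (G : SimpleGraph V) (r : ℕ) (d : ℝ) : Prop :=
  ∃ (m : ℕ) (H : SimpleGraph (Fin m)),
    0 < m ∧
    d < (H.edgeSet.ncard : ℝ) / (m : ℝ) ∧
    ∃ (f : Fin m → V) (P : ∀ (a b : Fin m), a < b → H.Adj a b → G.Walk (f a) (f b)),
      Function.Injective f ∧
      (∀ (a b : Fin m) (hab : a < b) (h : H.Adj a b), (P a b hab h).IsPath) ∧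
      (∀ (a b : Fin m) (hab : a < b) (h : H.Adj a b), (P a b hab h).length ≤ 2 * r + 1) ∧
      (∀ (a b : Fin m) (hab : a < b) (h : H.Adj a b),
        ∀ w ∈ (P a b hab h).support, w ≠ f a → w ≠ f b → ∀ c : Fin m, w ≠ f c) ∧
      (∀ (a b : Fin m) (hab : a < b) (h : H.Adj a b)
         (a' b' : Fin m) (hab' : a' < b') (h' : H.Adj a' b'), (a, b) ≠ (a', b') →
        ∀ w ∈ (P a b hab h).support, w ∈ (P a' b' hab' h').support → w = f a ∨ w = f b)


open Classical in
/-- A topological minor model. -/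
def TModel {V : Type} (G : SimpleGraph V) (l : ℕ) (B : Finset V) (K : SimpleGraph V)
    (I : Sym2 V → Finset V) : Prop :=
  (∀ a b, K.Adj a b → a ∈ B ∧ b ∈ B) ∧
  (∀ a b, K.Adj a b → ∃ p : G.Walk a b, p.length ≤ l ∧
    ∀ x ∈ p.support, x = a ∨ x = b ∨ x ∈ I s(a, b)) ∧
  (∀ e ∈ K.edgeSet, Disjoint (I e) B) ∧
  (∀ e ∈ K.edgeSet, ∀ e' ∈ K.edgeSet, e ≠ e' → Disjoint (I e) (I e'))

open Classical in
theorem tmodel_minor {V : Type} [Fintype V] (G : SimpleGraph V) (r d : ℕ) (B : Finset V)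
    (K : SimpleGraph V) (I : Sym2 V → Finset V) (hM : TModel G (2 * r + 1) B K I)
    (hB : B.Nonempty) (hE : d * B.card < K.edgeSet.ncard) :
    HasDepthTopMinorDensityGT G r (d : ℝ) := by
  obtain ⟨h1, h2, h3, h4⟩ := hM
  have hpos : 0 < B.card := hB.card_pos
  let f : Fin B.card → V := fun i => (B.equivFin.symm i).1
  have hfB : ∀ i, f i ∈ B := fun i => (B.equivFin.symm i).2
  have hf : Function.Injective f := fun i j hij => B.equivFin.symm.injective (Subtype.ext hij)
  have hsurj : ∀ v ∈ B, ∃ i, f i = v := fun v hv =>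
    ⟨B.equivFin ⟨v, hv⟩, by simp [f]⟩
  refine ⟨B.card, K.comap f, hpos, ?_, f, ?_⟩
  · have hle : K.edgeSet.ncard ≤ (K.comap f).edgeSet.ncard := by
      have hsub : K.edgeSet ⊆ Sym2.map f '' (K.comap f).edgeSet := by
        intro e
        induction e using Sym2.ind with
        | _ a b =>
          intro hab
          have hab' : K.Adj a b := hab
          obtain ⟨i, rfl⟩ := hsurj a (h1 _ _ hab').1
          obtain ⟨j, rfl⟩ := hsurj b (h1 _ _ hab').2
          exact ⟨s(i, j), hab', by simp⟩
      exact (Set.ncard_le_ncard hsub (Set.toFinite _)).trans (Set.ncard_image_le (Set.toFinite _))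
    rw [lt_div_iff₀ (by exact_mod_cast hpos)]
    exact_mod_cast hE.trans_le hle
  · choose p hp using h2
    have hsupp : ∀ a b (h : K.Adj a b), ∀ x ∈ (p a b h).bypass.support,
        x = a ∨ x = b ∨ x ∈ I s(a, b) := fun a b h x hx =>
      (hp a b h).2 x ((p a b h).support_bypass_subset_support hx)
    refine ⟨fun a b _ h => (p (f a) (f b) h).bypass, hf, ?_, ?_, ?_, ?_⟩
    · intro a b _ h
      exact (p (f a) (f b) h).bypass_isPath
    · intro a b _ h
      exact ((p (f a) (f b) h).length_bypass_le_length).trans (hp _ _ h).1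
    · intro a b _ h w hw ha hb c hc
      rcases hsupp _ _ h w hw with h | h | h'
      · exact ha h
      · exact hb h
      · exact Finset.disjoint_left.1 (h3 s(f a, f b) h) h' (hc ▸ hfB c)
    · intro a b hab h a' b' hab' h' hne w hw hw'
      have hI := hsupp _ _ h w hw
      have hI' := hsupp _ _ h' w hw'
      have hee : s(f a, f b) ≠ s(f a', f b') := by
        intro he
        rw [Sym2.eq_iff] at he
        rcases he with ⟨x, y⟩ | ⟨x, y⟩
        · exact hne (by rw [hf x, hf y])
        · have := hf x
          have := hf y
          subst_vars
          exact absurd hab (lt_asymm hab')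
      rcases hI with hI | hI | hI
      · exact Or.inl hI
      · exact Or.inr hI
      · exfalso
        have hnB := Finset.disjoint_left.1 (h3 s(f a, f b) h) hI
        rcases hI' with hI' | hI' | hI'
        · exact hnB (hI' ▸ hfB _)
        · exact hnB (hI' ▸ hfB _)
        · exact Finset.disjoint_left.1 (h4 _ h _ h' hee) hI hI'

open Classical in
theorem indep_of_sparse {V : Type} (K : SimpleGraph V) (d : ℕ) (S : Finset V)
    (h : ∀ B ⊆ S, ∑ v ∈ B, (B.filter (K.Adj v)).card ≤ 2 * d * B.card) :
    ∃ R ⊆ S, (∀ a ∈ R, ∀ b ∈ R, ¬ K.Adj a b) ∧ S.card ≤ (2 * d + 1) * R.card := by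
  induction S using Finset.strongInduction with
  | H S ih =>
    rcases S.eq_empty_or_nonempty with rfl | hne
    · exact ⟨∅, by simp⟩
    · obtain ⟨v, hv, hdeg⟩ : ∃ v ∈ S, (S.filter (K.Adj v)).card ≤ 2 * d := by
        by_contra! hc
        have h1 := h S subset_rfl
        have h2 := Finset.sum_lt_sum_of_nonempty hne hc
        simp only [Finset.sum_const, smul_eq_mul] at h2
        rw [mul_comm] at h2
        omega
      let T := S.filter (fun w => w ≠ v ∧ ¬ K.Adj v w)
      have hTS : T ⊆ S := Finset.filter_subset _ _
      have hT : T ⊂ S := by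
        refine Finset.ssubset_iff_subset_ne.2 ⟨hTS, fun he => ?_⟩
        rw [← he] at hv
        simp [T] at hv
      obtain ⟨R, hR, hind, hcard⟩ := ih T hT (fun B hB => h B (hB.trans hTS))
      have hvR : v ∉ R := fun hvR => by
        have := hR hvR
        simp [T] at this
      refine ⟨insert v R, ?_, ?_, ?_⟩
      · exact Finset.insert_subset hv (hR.trans hTS)
      · have hR' : ∀ a ∈ R, ¬ K.Adj v a := fun a ha => by
          have := hR ha
          simp only [T, Finset.mem_filter] at this
          exact this.2.2
        intro a ha b hb
        rw [Finset.mem_insert] at ha hb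
        rcases ha with rfl | ha <;> rcases hb with rfl | hb
        · exact K.loopless.irrefl _
        · exact hR' b hb
        · exact fun hh => hR' a ha hh.symm
        · exact hind a ha b hb
      · rw [Finset.card_insert_of_notMem hvR]
        have hsub : S ⊆ insert v (S.filter (K.Adj v) ∪ T) := by
          intro x hx
          by_cases hxv : x = v <;> by_cases hxa : K.Adj v x <;> simp [T, hx, hxv, hxa]
        have h1 := Finset.card_le_card hsub
        have h2 := Finset.card_insert_le v (S.filter (K.Adj v) ∪ T)
        have h3 := Finset.card_union_le (S.filter (K.Adj v)) T
        nlinarith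

theorem walk_trunc {V : Type} (G : SimpleGraph V) (M : Set V) {a t : V} (p : G.Walk a t)
    (ht : t ∈ M) : ∃ w ∈ M, ∃ q : G.Walk a w, q.length ≤ p.length ∧
      (∀ x ∈ q.support, x ∈ p.support) ∧ ∀ x ∈ q.support, x ≠ w → x ∉ M := by
  classical
  induction p with
  | nil => exact ⟨_, ht, .nil, by simp, by simp, by simp⟩
  | @cons u v w hadj p ih =>
    by_cases hu : u ∈ M
    · exact ⟨u, hu, .nil, by simp, by simp, by simp⟩
    · obtain ⟨y, hy, q, h1, h2, h3⟩ := ih ht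
      refine ⟨y, hy, .cons hadj q, by simpa using h1, ?_, ?_⟩
      · intro x hx
        simp only [SimpleGraph.Walk.support_cons, List.mem_cons] at hx ⊢
        exact hx.imp_right (h2 x)
      · intro x hx hne
        simp only [SimpleGraph.Walk.support_cons, List.mem_cons] at hx
        rcases hx with rfl | hx
        · exact hu
        · exact h3 x hx hne

open Classical in
theorem tmodel_extend {V : Type} (G : SimpleGraph V) (l : ℕ) (B : Finset V)
    (K : SimpleGraph V) (I : Sym2 V → Finset V) (hM : TModel G l B K I)
    (hI : ∀ e ∈ K.edgeSet, (I e).card + 1 ≤ l) {u v : V} (hu : u ∈ B) (hv : v ∈ B)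
    (huv : u ≠ v) (hnadj : ¬ K.Adj u v) (p : G.Walk u v) (hp : p.length ≤ l)
    (hpB : ∀ x ∈ p.support, x = u ∨ x = v ∨ (x ∉ B ∧ ∀ e ∈ K.edgeSet, x ∉ I e)) :
    ∃ K' I', K < K' ∧ TModel G l B K' I' ∧ ∀ e ∈ K'.edgeSet, (I' e).card + 1 ≤ l := by
  obtain ⟨h1, h2, h3, h4⟩ := hM
  let q := p.bypass
  have hq : q.IsPath := p.bypass_isPath
  have hql : q.length ≤ l := p.length_bypass_le_length.trans hp
  let J : Finset V := (q.support.toFinset.erase u).erase v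
  have hJmem : ∀ x, x ∈ J ↔ x ≠ v ∧ x ≠ u ∧ x ∈ q.support := by
    intro x; simp [J]
  have hJB : ∀ x ∈ J, x ∉ B ∧ ∀ e ∈ K.edgeSet, x ∉ I e := by
    intro x hx
    obtain ⟨ha, hb, hc⟩ := (hJmem x).1 hx
    rcases hpB x (p.support_bypass_subset_support hc) with h | h | h
    · exact absurd h hb
    · exact absurd h ha
    · exact h
  have hJcard : J.card + 1 ≤ l := by
    have e1 : q.support.toFinset.card = q.length + 1 := by
      rw [List.toFinset_card_of_nodup hq.support_nodup, SimpleGraph.Walk.length_support]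
    have e2 : (q.support.toFinset.erase u).card = q.length := by
      rw [Finset.card_erase_of_mem (by simp), e1]; simp
    have e3 : J.card = q.length - 1 := by
      rw [Finset.card_erase_of_mem (by simp [huv.symm]), e2]
    have e4 : 0 < q.length := by
      by_contra h0
      exact huv (SimpleGraph.Walk.eq_of_length_eq_zero (p := q) (by omega))
    omega
  have hadj : ∀ a b, (K ⊔ SimpleGraph.edge u v).Adj a b → K.Adj a b ∨ s(a, b) = s(u, v) := by
    intro a b h
    rw [SimpleGraph.sup_adj, SimpleGraph.edge_adj] at h
    rcases h with h | h
    · exact Or.inl h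
    · right; rw [Sym2.eq_iff]; tauto
  have hed : ∀ e ∈ (K ⊔ SimpleGraph.edge u v).edgeSet, e ∈ K.edgeSet ∧ e ≠ s(u, v) ∨ e = s(u, v) := by
    intro e
    induction e using Sym2.ind with
    | _ a b =>
      intro h
      rcases hadj a b h with h | h
      · by_cases h' : s(a, b) = s(u, v)
        · exact Or.inr h'
        · exact Or.inl ⟨h, h'⟩
      · exact Or.inr h
  refine ⟨K ⊔ SimpleGraph.edge u v, Function.update I s(u, v) J, ?_, ⟨?_, ?_, ?_, ?_⟩, ?_⟩
  · refine lt_of_le_of_ne le_sup_left (fun he => hnadj ?_)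
    rw [he, SimpleGraph.sup_adj, SimpleGraph.edge_adj]
    simp [huv]
  · intro a b h
    rcases hadj a b h with h | h
    · exact h1 a b h
    · rw [Sym2.eq_iff] at h
      rcases h with ⟨rfl, rfl⟩ | ⟨rfl, rfl⟩
      · exact ⟨hu, hv⟩
      · exact ⟨hv, hu⟩
  · intro a b h
    by_cases hab : s(a, b) = s(u, v)
    · rw [hab, Function.update_self]
      rw [Sym2.eq_iff] at hab
      rcases hab with ⟨rfl, rfl⟩ | ⟨rfl, rfl⟩
      · refine ⟨q, hql, fun x hx => ?_⟩
        have := hJmem x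
        tauto
      · refine ⟨q.reverse, by simpa using hql, fun x hx => ?_⟩
        have := hJmem x
        have hx' : x ∈ q.support := by simpa using hx
        tauto
    · rw [Function.update_of_ne hab]
      rcases hadj a b h with h | h
      · exact h2 a b h
      · exact absurd h hab
  · intro e he
    rcases hed e he with ⟨h, h'⟩ | rfl
    · rw [Function.update_of_ne h']; exact h3 e h
    · rw [Function.update_self, Finset.disjoint_left]
      exact fun x hx => (hJB x hx).1
  · intro e he e' he' hne
    rcases hed e he with ⟨h, h'⟩ | rfl <;> rcases hed e' he' with ⟨g, g'⟩ | rfl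
    · rw [Function.update_of_ne h', Function.update_of_ne g']; exact h4 e h e' g hne
    · rw [Function.update_of_ne h', Function.update_self, Finset.disjoint_right]
      exact fun x hx => (hJB x hx).2 e h
    · rw [Function.update_of_ne g', Function.update_self, Finset.disjoint_left]
      exact fun x hx => (hJB x hx).2 e' g
    · exact absurd rfl hne
  · intro e he
    rcases hed e he with ⟨h, h'⟩ | rfl
    · rw [Function.update_of_ne h']; exact hI e h
    · rw [Function.update_self]; exact hJcard

theorem bconn_ge {V : Type} (G : SimpleGraph V) (S : Set V) (u : V) (r N : ℕ)
    (h : N < bconn G S u r) : BConnGE G S u r (bconn G S u r) := by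
  have hne : {m : ℕ | BConnGE G S u r m}.Nonempty := by
    by_contra hc
    rw [Set.not_nonempty_iff_eq_empty] at hc
    unfold bconn at h
    rw [hc] at h
    simp at h
  have hbd : BddAbove {m : ℕ | BConnGE G S u r m} := by
    by_contra hc
    unfold bconn at h
    rw [Nat.sSup_of_not_bddAbove hc] at h
    omega
  exact Nat.sSup_mem hne hbd

open Classical in
/-- The truncated fans. -/
theorem fan_trunc {V : Type} (G : SimpleGraph V) (S : Set V) (M : Finset V)
    (hSM : ∀ x ∈ S, x ∈ M) (v : V) (r N : ℕ)
    (h : N < bconn G S v r) :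
    ∃ (t : Fin (N + 1) → V) (q : ∀ i, G.Walk v (t i)),
      (∀ i, (q i).IsPath ∧ (q i).length ≤ r ∧ t i ∈ M ∧ t i ≠ v) ∧
      (∀ i, ∀ x ∈ (q i).support, x ≠ v → x ≠ t i → x ∉ M) ∧
      (∀ i j, i ≠ j → ∀ x ∈ (q i).support, x ∈ (q j).support → x = v) := by
  obtain ⟨t, P, h1, h2, h3, h4, h5⟩ := bconn_ge G S v r N h
  have key : ∀ i, ∃ w ∈ {x | x ∈ M ∧ x ≠ v}, ∃ q : G.Walk v w, q.length ≤ (P i).length ∧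
      (∀ x ∈ q.support, x ∈ (P i).support) ∧ ∀ x ∈ q.support, x ≠ w → x ∉ {x | x ∈ M ∧ x ≠ v} :=
    fun i => walk_trunc G _ (P i) ⟨hSM _ (h3 i).1, (h3 i).2⟩
  choose w hw q hq1 hq2 hq3 using key
  let c : Fin (N + 1) → Fin (bconn G S v r) := Fin.castLE h
  refine ⟨fun i => w (c i), fun i => (q (c i)).bypass, ?_, ?_, ?_⟩
  · intro i
    exact ⟨(q (c i)).bypass_isPath, (q (c i)).length_bypass_le_length.trans ((hq1 _).trans (h2 _)),
      (hw _).1, (hw _).2⟩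
  · intro i x hx hv ht hM
    exact hq3 (c i) x ((q (c i)).support_bypass_subset_support hx) ht ⟨hM, hv⟩
  · intro i j hij x hx hx'
    refine h5 (c i) (c j) (fun hc => hij ?_) x (hq2 _ x ((q (c i)).support_bypass_subset_support hx))
      (hq2 _ x ((q (c j)).support_bypass_subset_support hx'))
    exact Fin.castLE_injective h hc

open Classical in
theorem tmodel_restrict {V : Type} [Fintype V] (G : SimpleGraph V) (l d : ℕ) (S : Finset V)
    (K : SimpleGraph V) (I : Sym2 V → Finset V) (hM : TModel G l S K I)
    (hno : ∀ (B : Finset V) (K : SimpleGraph V) (I : Sym2 V → Finset V), TModel G l B K I →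
      K.edgeSet.ncard ≤ d * B.card) (B : Finset V) (hB : B ⊆ S) :
    ∑ v ∈ B, (B.filter (K.Adj v)).card ≤ 2 * d * B.card := by
  obtain ⟨h1, h2, h3, h4⟩ := hM
  let K' : SimpleGraph V :=
    { Adj := fun a b => K.Adj a b ∧ a ∈ B ∧ b ∈ B
      symm := ⟨fun a b h => ⟨h.1.symm, h.2.2, h.2.1⟩⟩
      loopless := ⟨fun a h => K.loopless.irrefl a h.1⟩ }
  have hle : K' ≤ K := fun a b h => h.1
  have hK' : K'.edgeSet ⊆ K.edgeSet := SimpleGraph.edgeSet_mono hle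
  have hmod : TModel G l B K' I :=
    ⟨fun a b h => h.2, fun a b h => h2 a b h.1, fun e he => (h3 e (hK' he)).mono_right hB,
      fun e he e' he' => h4 e (hK' he) e' (hK' he')⟩
  have hc := hno B K' I hmod
  have hs := K'.sum_degrees_eq_twice_card_edges
  have hdeg : ∀ v ∈ B, (B.filter (K.Adj v)).card = K'.degree v := by
    intro v hv
    rw [← SimpleGraph.card_neighborFinset_eq_degree]
    congr 1
    ext x
    simp [K', hv, and_comm]
  have hn : K'.edgeSet.ncard = K'.edgeFinset.card := by
    rw [← SimpleGraph.coe_edgeFinset, Set.ncard_coe_finset]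
  calc ∑ v ∈ B, (B.filter (K.Adj v)).card = ∑ v ∈ B, K'.degree v := Finset.sum_congr rfl hdeg
    _ ≤ ∑ v, K'.degree v := Finset.sum_le_univ_sum_of_nonneg (by simp)
    _ = 2 * K'.edgeFinset.card := hs
    _ ≤ 2 * d * B.card := by rw [mul_assoc, ← hn]; omega

open Classical in
theorem stmt2_core {V : Type} [Fintype V] (G : SimpleGraph V) (r d : ℕ) (hr : 1 ≤ r)
    (hd : 1 ≤ d) (S : Finset V) (hS : S.Nonempty)
    (hb : ∀ v ∈ S, 6 * r * d ^ 3 < bconn G (S : Set V) v r)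
    (hno : ∀ (B : Finset V) (K : SimpleGraph V) (I : Sym2 V → Finset V),
      TModel G (2 * r - 1) B K I → K.edgeSet.ncard ≤ d * B.card) : False := by
  set N := 6 * r * d ^ 3 with hN
  -- a maximal model on S
  let good : Set (SimpleGraph V) := {K | ∃ I, TModel G (2 * r - 1) S K I ∧
    ∀ e ∈ K.edgeSet, (I e).card + 1 ≤ 2 * r - 1}
  have hgood : good.Nonempty := by
    refine ⟨⊥, fun _ => ∅, ⟨?_, ?_, ?_, ?_⟩, ?_⟩ <;> simp
  obtain ⟨K, hK⟩ := (Set.toFinite good).exists_maximal hgood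
  obtain ⟨I, hmod, hcard⟩ := hK.prop
  have hmax : ∀ {u v : V}, u ∈ S → v ∈ S → u ≠ v → ¬ K.Adj u v → ∀ p : G.Walk u v,
      p.length ≤ 2 * r - 1 →
      (∀ x ∈ p.support, x = u ∨ x = v ∨ (x ∉ S ∧ ∀ e ∈ K.edgeSet, x ∉ I e)) → False := by
    intro u v hu hv huv hna p hp hx
    obtain ⟨K', I', hlt, hm', hc'⟩ := tmodel_extend G _ S K I hmod hcard hu hv huv hna p hp hx
    exact hK.not_gt ⟨I', hm', hc'⟩ hlt
  obtain ⟨R, hRS, hind, hRcard⟩ := indep_of_sparse K d S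
    (tmodel_restrict G _ d S K I hmod hno)
  let M : Finset V := S ∪ K.edgeFinset.biUnion I
  have hSM : ∀ x ∈ (S : Set V), x ∈ M := fun x hx => Finset.mem_union_left _ hx
  have hMout : ∀ x, x ∉ M → x ∉ S ∧ ∀ e ∈ K.edgeSet, x ∉ I e := by
    intro x hx
    simp only [M, Finset.mem_union, Finset.mem_biUnion, SimpleGraph.mem_edgeFinset] at hx
    push Not at hx
    exact hx
  have hMcard : M.card ≤ S.card + d * S.card * (2 * r - 2) := by
    refine (Finset.card_union_le _ _).trans (Nat.add_le_add_left ?_ _)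
    refine (Finset.card_biUnion_le_card_mul _ _ (2 * r - 2) ?_).trans ?_
    · intro e he
      have := hcard e (by simpa using he)
      omega
    · apply Nat.mul_le_mul_right
      rw [← Set.ncard_coe_finset, SimpleGraph.coe_edgeFinset]
      exact hno S K I hmod
  choose t q hq1 hq2 hq3 using fun (v : R) =>
    fan_trunc G (S : Set V) M hSM v.1 r N (hb v.1 (hRS v.2))
  have hRM : ∀ v : R, v.1 ∈ M := fun v => hSM _ (hRS v.2)
  have htR : ∀ v i, t v i ∉ R := by
    intro v i ht
    refine hmax (hRS v.2) (hRS ht) (hq1 v i).2.2.2.symm (hind _ v.2 _ ht) (q v i)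
      (by have := (hq1 v i).2.1; omega) ?_
    intro x hx
    by_cases h1 : x = v.1
    · exact Or.inl h1
    · by_cases h2 : x = t v i
      · exact Or.inr (Or.inl h2)
      · exact Or.inr (Or.inr (hMout x (hq2 v i x hx h1 h2)))
  have hpre : ∀ v i x, x ∈ (q v i).support → x ∉ M → ∃ p : G.Walk v.1 x, p.length + 1 ≤ r ∧
      ∀ y ∈ p.support, y = v.1 ∨ y ∉ M := by
    intro v i x hx hxM
    have hxt : x ≠ t v i := fun h => hxM (h ▸ (hq1 v i).2.2.1)
    refine ⟨(q v i).takeUntil x hx, ?_, ?_⟩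
    · have h1 := SimpleGraph.Walk.length_takeUntil_lt hx hxt
      have h2 := (hq1 v i).2.1
      omega
    · intro y hy
      by_cases hyv : y = v.1
      · exact Or.inl hyv
      · right
        refine hq2 v i y ((q v i).support_takeUntil_subset_support hx hy) hyv ?_
        rintro rfl
        exact SimpleGraph.Walk.endpoint_notMem_support_takeUntil (hq1 v i).1 hx hxt.symm hy
  have hcross : ∀ v i v' j x, v ≠ v' → x ∈ (q v i).support → x ∈ (q v' j).support →
      x ∉ M → False := by
    intro v i v' j x hne hx hx' hxM
    obtain ⟨p, hp, hpy⟩ := hpre v i x hx hxM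
    obtain ⟨p', hp', hpy'⟩ := hpre v' j x hx' hxM
    refine hmax (hRS v.2) (hRS v'.2) (fun h => hne (Subtype.ext h)) (hind _ v.2 _ v'.2)
      (p.append p'.reverse) ?_ ?_
    · rw [SimpleGraph.Walk.length_append, SimpleGraph.Walk.length_reverse]
      omega
    · intro y hy
      rw [SimpleGraph.Walk.mem_support_append_iff, SimpleGraph.Walk.support_reverse,
        List.mem_reverse] at hy
      rcases hy with hy | hy
      · rcases hpy y hy with h | h
        · exact Or.inl h
        · exact Or.inr (Or.inr (hMout y h))
      · rcases hpy' y hy with h | h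
        · exact Or.inr (Or.inl h)
        · exact Or.inr (Or.inr (hMout y h))
  let J : R × Fin (N + 1) → Finset V := fun z => (q z.1 z.2).support.toFinset.filter (· ∉ M)
  let ed : R × Fin (N + 1) → Sym2 V := fun z => s(z.1.1, t z.1 z.2)
  have hedinj : Function.Injective ed := by
    rintro ⟨v, i⟩ ⟨v', j⟩ h
    simp only [ed, Sym2.eq_iff] at h
    rcases h with ⟨h1, h2⟩ | ⟨h1, _⟩
    · have h3 : v = v' := Subtype.ext h1
      subst h3
      by_cases hij : i = j
      · rw [hij]
      · exfalso
        refine (hq1 v i).2.2.2 (hq3 v i j hij _ (q v i).end_mem_support ?_)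
        rw [h2]
        exact (q v j).end_mem_support
    · exact absurd (h1 ▸ v.2) (htR v' j)
  let K2 : SimpleGraph V := SimpleGraph.fromEdgeSet (Set.range ed)
  have hK2 : K2.edgeSet = Set.range ed := by
    rw [SimpleGraph.edgeSet_fromEdgeSet]
    refine Set.Subset.antisymm Set.diff_subset ?_
    rintro _ ⟨z, rfl⟩
    refine ⟨⟨z, rfl⟩, ?_⟩
    have := (hq1 z.1 z.2).2.2.2
    simpa [ed] using this.symm
  let I2 : Sym2 V → Finset V := fun e => if h : ∃ z, ed z = e then J h.choose else ∅
  have hI2 : ∀ z, I2 (ed z) = J z := by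
    intro z
    have h : ∃ z', ed z' = ed z := ⟨z, rfl⟩
    simp only [I2, dif_pos h]
    rw [hedinj h.choose_spec]
  have hadj2 : ∀ a b, K2.Adj a b → ∃ z, ed z = s(a, b) := by
    intro a b h
    have : s(a, b) ∈ K2.edgeSet := h
    rwa [hK2] at this
  have hsup : ∀ z : R × Fin (N + 1), ∀ x ∈ (q z.1 z.2).support,
      x = z.1.1 ∨ x = t z.1 z.2 ∨ x ∈ J z := by
    intro z x hx
    by_cases h1 : x = z.1.1
    · exact Or.inl h1
    · by_cases h2 : x = t z.1 z.2
      · exact Or.inr (Or.inl h2)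
      · have := hq2 z.1 z.2 x hx h1 h2
        right; right
        simp [J, hx, this]
  have hmod2 : TModel G (2 * r - 1) M K2 I2 := by
    refine ⟨?_, ?_, ?_, ?_⟩
    · intro a b h
      obtain ⟨z, hz⟩ := hadj2 a b h
      have h1 := hRM z.1
      have h2 := (hq1 z.1 z.2).2.2.1
      simp only [ed, Sym2.eq_iff] at hz
      rcases hz with ⟨rfl, rfl⟩ | ⟨rfl, rfl⟩
      · exact ⟨h1, h2⟩
      · exact ⟨h2, h1⟩
    · intro a b h
      obtain ⟨z, hz⟩ := hadj2 a b h
      rw [← hz, hI2]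
      have hl := (hq1 z.1 z.2).2.1
      simp only [ed, Sym2.eq_iff] at hz
      rcases hz with ⟨rfl, rfl⟩ | ⟨rfl, rfl⟩
      · exact ⟨q z.1 z.2, by omega, hsup z⟩
      · refine ⟨(q z.1 z.2).reverse, by rw [SimpleGraph.Walk.length_reverse]; omega, ?_⟩
        intro x hx
        rw [SimpleGraph.Walk.support_reverse, List.mem_reverse] at hx
        have := hsup z x hx
        tauto
    · intro e he
      rw [hK2] at he
      obtain ⟨z, rfl⟩ := he
      rw [hI2, Finset.disjoint_left]
      intro x hx
      exact (Finset.mem_filter.1 hx).2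
    · intro e he e' he' hne
      rw [hK2] at he he'
      obtain ⟨z, rfl⟩ := he
      obtain ⟨z', rfl⟩ := he'
      rw [hI2, hI2, Finset.disjoint_left]
      intro x hx hx'
      obtain ⟨hx, hxM⟩ := Finset.mem_filter.1 hx
      obtain ⟨hx', _⟩ := Finset.mem_filter.1 hx'
      rw [List.mem_toFinset] at hx hx'
      obtain ⟨v, i⟩ := z
      obtain ⟨v', j⟩ := z'
      by_cases hv : v = v'
      · subst hv
        have hij : i ≠ j := by rintro rfl; exact hne rfl
        have := hq3 v i j hij x hx hx'
        exact hxM (this ▸ hRM v)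
      · exact hcross v i v' j x hv hx hx' hxM
  have hfin := hno M K2 I2 hmod2
  have hcount : K2.edgeSet.ncard = R.card * (N + 1) := by
    rw [hK2, ← Set.image_univ, Set.ncard_image_of_injective _ hedinj, Set.ncard_univ]
    simp
  rw [hcount] at hfin
  have hspos : 0 < S.card := hS.card_pos
  have e1 : (N + 1) * S.card ≤ ((2 * d + 1) * d * (1 + d * (2 * r - 2))) * S.card := by
    calc (N + 1) * S.card ≤ (N + 1) * ((2 * d + 1) * R.card) := Nat.mul_le_mul_left _ hRcard
      _ = (2 * d + 1) * (R.card * (N + 1)) := by ring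
      _ ≤ (2 * d + 1) * (d * (S.card + d * S.card * (2 * r - 2))) :=
        Nat.mul_le_mul_left _ (hfin.trans (Nat.mul_le_mul_left _ hMcard))
      _ = _ := by ring
  have e2 := Nat.le_of_mul_le_mul_right e1 hspos
  have e3 : (2 * d + 1) * d * (1 + d * (2 * r - 2)) ≤ (3 * d) * d * (d * (2 * r)) := by
    refine Nat.mul_le_mul (Nat.mul_le_mul_right _ (by omega)) ?_
    obtain ⟨k, rfl⟩ : ∃ k, r = k + 1 := ⟨r - 1, by omega⟩
    have : 2 * (k + 1) - 2 = 2 * k := by omega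
    rw [this]
    nlinarith
  have e4 : (3 * d) * d * (d * (2 * r)) = N := by rw [hN]; ring
  omega

/-- If every vertex of a nonempty set `S` has back-connectivity `bconn_r(S,·)` larger than
`6rd³`, then `G` admits a depth-`(r−1)` topological minor with edge density larger than `d`. -/
theorem stmt2 {V : Type} [Fintype V] (G : SimpleGraph V) (r d : ℕ) (hr : 1 ≤ r) (hd : 1 ≤ d)
    (S : Set V) (hS : S.Nonempty)
    (hb : ∀ v ∈ S, 6 * r * d ^ 3 < bconn G S v r) :
    HasDepthTopMinorDensityGT G (r - 1) (d : ℝ) := by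
  classical
  by_contra hcon
  refine stmt2_core G r d hr hd S.toFinset (by simpa using hS) ?_ ?_
  · intro v hv
    rw [Set.coe_toFinset]
    exact hb v (by simpa using hv)
  · intro B K I hM
    by_contra hlt
    push Not at hlt
    have he : 2 * r - 1 = 2 * (r - 1) + 1 := by omega
    rw [he] at hM
    rcases B.eq_empty_or_nonempty with rfl | hB
    · have : K = ⊥ := by
        ext a b
        simp only [SimpleGraph.bot_adj, iff_false]
        intro h
        simpa using (hM.1 a b h).1
      subst this
      simp at hlt
    · exact hcon (tmodel_minor G (r - 1) d B K I hM hB hlt)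
end

section
/- Let ε > 0 be a real number, let r ≥ 1 and d ≥ 1 be integers, let G be a finite simple graph, and let S be a nonempty subset of V(G) such that at least ε·|S| vertices v ∈ S satisfy bconn_r(S,v) > 6ε⁻¹rd³. Then G admits a depth-(r−1) topological minor with edge density strictly larger than d. -/
/-- `x` and `y` are joined by a walk of length at most `L` through `X`. -/
def AuxConn {V : Type} (G : SimpleGraph V) (L : ℕ) (X : Finset V) (x y : V) : Prop :=
  ∃ p : G.Walk x y, p.length ≤ L ∧ ∀ w ∈ p.support, w = x ∨ w = y ∨ w ∈ X

lemma AuxConn.symm {V : Type} {G : SimpleGraph V} {L : ℕ} {X : Finset V} {x y : V}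
    (h : AuxConn G L X x y) : AuxConn G L X y x := by
  obtain ⟨p, h1, h2⟩ := h
  refine ⟨p.reverse, by simpa using h1, fun w hw => ?_⟩
  have := h2 w (by simpa using hw)
  tauto

/-- A topological minor model. -/
structure AuxModel {V : Type} (G : SimpleGraph V) (B : Finset V) (L : ℕ) (E : Finset (Sym2 V))
    (I : Sym2 V → Finset V) : Prop where
  ne : ∀ x y, s(x, y) ∈ E → x ≠ y
  mem : ∀ x y, s(x, y) ∈ E → x ∈ B
  conn : ∀ x y, s(x, y) ∈ E → AuxConn G L (I s(x, y)) x y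
  notB : ∀ e ∈ E, ∀ w ∈ I e, w ∉ B
  disj : ∀ e ∈ E, ∀ e' ∈ E, e ≠ e' → ∀ w ∈ I e, w ∉ I e'

lemma AuxModel.dense {V : Type} {G : SimpleGraph V} {B : Finset V} {r : ℕ} {E : Finset (Sym2 V)}
    {I : Sym2 V → Finset V} (h : AuxModel G B (2 * r + 1) E I) (d : ℕ)
    (hd : d * B.card < E.card) : HasDepthTopMinorDensityGT G r (d : ℝ) := by
  classical
  let g : Fin B.card ≃ B := B.equivFin.symm
  let f : Fin B.card → V := fun i => (g i : V)
  have hf : Function.Injective f := fun i j hij => g.injective (Subtype.ext hij)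
  have hfB : ∀ i, f i ∈ B := fun i => (g i).2
  have hBf : ∀ x ∈ B, ∃ i, f i = x := fun x hx => ⟨g.symm ⟨x, hx⟩, by simp [f]⟩
  let H : SimpleGraph (Fin B.card) :=
    { Adj := fun a b => s(f a, f b) ∈ E
      symm := ⟨fun a b hab => by rw [Sym2.eq_swap]; exact hab⟩
      loopless := ⟨fun a ha => h.ne _ _ ha rfl⟩ }
  have hEpos : 0 < E.card := by omega
  have hBpos : 0 < B.card := by
    obtain ⟨e, he⟩ := Finset.card_pos.1 hEpos
    induction e using Sym2.ind with
    | _ x y => exact Finset.card_pos.2 ⟨x, h.mem _ _ he⟩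
  have hP : ∀ (a b : Fin B.card), a < b → H.Adj a b → ∃ p : G.Walk (f a) (f b),
      p.IsPath ∧ p.length ≤ 2 * r + 1 ∧
        ∀ w ∈ p.support, w = f a ∨ w = f b ∨ w ∈ I s(f a, f b) := by
    intro a b _ hab
    obtain ⟨p, h1, h2⟩ := h.conn _ _ hab
    exact ⟨p.bypass, p.bypass_isPath, p.length_bypass_le_length.trans h1,
      fun w hw => h2 w (p.support_bypass_subset_support hw)⟩
  choose P hP1 hP2 hP3 using hP
  refine ⟨B.card, H, hBpos, ?_, f, P, hf, hP1, hP2, ?_, ?_⟩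
  · have hcard : E.card ≤ H.edgeSet.ncard := by
      have hsub : (E : Set (Sym2 V)) ⊆ (Sym2.map f) '' H.edgeSet := by
        intro e he
        induction e using Sym2.ind with
        | _ x y =>
          have he : s(x, y) ∈ E := he
          obtain ⟨a, rfl⟩ := hBf x (h.mem _ _ he)
          obtain ⟨b, rfl⟩ := hBf y (h.mem y (f a) (by rw [Sym2.eq_swap]; exact he))
          exact ⟨s(a, b), he, rfl⟩
      calc E.card = (E : Set (Sym2 V)).ncard := (Set.ncard_coe_finset E).symm
        _ ≤ ((Sym2.map f) '' H.edgeSet).ncard := Set.ncard_le_ncard hsub (Set.toFinite _)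
        _ ≤ _ := Set.ncard_image_le (Set.toFinite _)
    rw [lt_div_iff₀ (by exact_mod_cast hBpos)]
    exact_mod_cast hd.trans_le hcard
  · intro a b hab hadj w hw h1 h2 c hc
    rcases hP3 a b hab hadj w hw with h3 | h3 | h3
    · exact h1 h3
    · exact h2 h3
    · exact h.notB _ hadj w h3 (hc ▸ hfB c)
  · intro a b hab hadj a' b' hab' hadj' hne w hw hw'
    rcases hP3 a b hab hadj w hw with h3 | h3 | h3
    · exact Or.inl h3
    · exact Or.inr h3
    · exfalso
      have hwB := h.notB _ hadj w h3
      rcases hP3 a' b' hab' hadj' w hw' with h4 | h4 | h4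
      · exact hwB (h4 ▸ hfB a')
      · exact hwB (h4 ▸ hfB b')
      · refine h.disj _ hadj _ hadj' ?_ w h3 h4
        intro heq
        rw [Sym2.eq_iff] at heq
        rcases heq with ⟨e1, e2⟩ | ⟨e1, e2⟩
        · exact hne (by rw [hf e1, hf e2])
        · have := hf e1
          have := hf e2
          subst_vars
          exact absurd hab (not_lt.2 hab'.le)

lemma aux_trunc {V : Type} {G : SimpleGraph V} (N : Finset V) : ∀ (n : ℕ) {u t : V}
    (p : G.Walk u t), p.length ≤ n → t ∈ N → t ≠ u →
    ∃ y, ∃ q : G.Walk u y, q.IsPath ∧ q.length ≤ p.length ∧ q.support ⊆ p.support ∧ y ∈ N ∧ y ≠ u ∧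
      ∀ w ∈ q.support, w ≠ u → w ≠ y → w ∉ N := by
  classical
  intro n
  induction n with
  | zero =>
    intro u t p hp ht hne
    exact absurd (SimpleGraph.Walk.eq_of_length_eq_zero (by omega : p.length = 0)).symm hne
  | succ n ih =>
    intro u t p hp ht hne
    by_cases hc : ∀ w ∈ p.support, w ≠ u → w ≠ t → w ∉ N
    · exact ⟨t, p.bypass, p.bypass_isPath, p.length_bypass_le_length, p.support_bypass_subset_support, ht, hne,
        fun w hw => hc w (p.support_bypass_subset_support hw)⟩
    · push Not at hc
      obtain ⟨w, hw, h1, h2, h3⟩ := hc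
      have hlt := p.length_takeUntil_lt_length hw h2
      obtain ⟨y, q, hq1, hq2, hq3, hq4⟩ := ih (p.takeUntil w hw) (by omega) h3 h1
      exact ⟨y, q, hq1, by omega, fun x hx => p.support_takeUntil_subset_support hw (hq3 hx), hq4⟩

lemma aux_indep {V : Type} (E : Finset (Sym2 V)) (S : Finset V) (d : ℕ)
    (hne : ∀ x y, s(x, y) ∈ E → x ≠ y)
    (hE : ∀ T ⊆ S, ∀ F ⊆ E, (∀ e ∈ F, ∀ x ∈ e, x ∈ T) → F.card ≤ d * T.card) :
    ∀ (n : ℕ) (T : Finset V), T.card ≤ n → T ⊆ S →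
      ∃ J ⊆ T, (∀ x ∈ J, ∀ y ∈ J, s(x, y) ∉ E) ∧ T.card ≤ (2 * d + 1) * J.card := by
  classical
  intro n
  induction n with
  | zero =>
    intro T hT _
    exact ⟨∅, by simp, by simp, by omega⟩
  | succ n ih =>
    intro T hT hTS
    rcases T.eq_empty_or_nonempty with rfl | hTn
    · exact ⟨∅, by simp, by simp, by simp⟩
    let F := E.filter (fun e => ∀ x ∈ e, x ∈ T)
    have hF : F.card ≤ d * T.card := hE T hTS F (Finset.filter_subset _ _)
      (fun e he => (Finset.mem_filter.1 he).2)
    have hdeg : ∃ v ∈ T, (T.filter (fun u => s(u, v) ∈ E)).card ≤ 2 * d := by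
      by_contra hcon
      push Not at hcon
      have h1 : ∑ v ∈ T, (F.filter (fun e => v ∈ e)).card
          = ∑ e ∈ F, (T.filter (fun v => v ∈ e)).card :=
        Finset.sum_card_bipartiteAbove_eq_sum_card_bipartiteBelow (fun v e => v ∈ e)
      have h2 : ∑ e ∈ F, (T.filter (fun v => v ∈ e)).card ≤ F.card * 2 := by
        apply Finset.sum_le_card_nsmul
        intro e _
        induction e using Sym2.ind with
        | _ x y =>
          refine (Finset.card_le_card (t := {x, y}) ?_).trans Finset.card_le_two
          intro w hw
          have := (Finset.mem_filter.1 hw).2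
          simpa using this
      have h3 : T.card * (2 * d + 1) ≤ ∑ v ∈ T, (F.filter (fun e => v ∈ e)).card := by
        rw [← smul_eq_mul]
        apply Finset.card_nsmul_le_sum
        intro v hv
        refine (Nat.succ_le_of_lt (hcon v hv)).trans ?_
        apply Finset.card_le_card_of_injOn (fun u => s(u, v))
        · intro u hu
          have hu := Finset.mem_filter.1 hu
          simp only [F, Finset.coe_filter, Set.mem_setOf_eq, Finset.mem_filter]
          refine ⟨⟨hu.2, ?_⟩, by simp⟩
          intro x hx
          rcases Sym2.mem_iff.1 hx with rfl | rfl
          · exact hu.1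
          · exact hv
        · intro a _ b _ hab
          exact Sym2.congr_left.1 hab
      have := hTn.card_pos
      nlinarith
    obtain ⟨v, hv, hvd⟩ := hdeg
    let T' := (T.erase v) \ (T.filter (fun u => s(u, v) ∈ E))
    have hT'T : T' ⊆ T := Finset.sdiff_subset.trans (Finset.erase_subset _ _)
    have hvT' : v ∉ T' := by simp [T']
    have hc1 : T.card - 1 - 2 * d ≤ T'.card := by
      have := Finset.le_card_sdiff (T.filter (fun u => s(u, v) ∈ E)) (T.erase v)
      rw [Finset.card_erase_of_mem hv] at this
      change _ ≤ T'.card at this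
      omega
    have hc2 : T'.card < T.card := Finset.card_lt_card
      ⟨hT'T, fun hh => hvT' (hh hv)⟩
    obtain ⟨J, hJ1, hJ2, hJ3⟩ := ih T' (by omega) (hT'T.trans hTS)
    have hvJ : v ∉ J := fun hh => hvT' (hJ1 hh)
    have hadj : ∀ x ∈ J, s(x, v) ∉ E := by
      intro x hx hxE
      have := hJ1 hx
      simp only [T', Finset.mem_sdiff, Finset.mem_filter, Finset.mem_erase] at this
      exact this.2 ⟨this.1.2, hxE⟩
    refine ⟨insert v J, ?_, ?_, ?_⟩
    · intro x hx
      rcases Finset.mem_insert.1 hx with rfl | hx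
      · exact hv
      · exact hT'T (hJ1 hx)
    · intro x hx y hy hxy
      rcases Finset.mem_insert.1 hx with h1 | h1 <;> rcases Finset.mem_insert.1 hy with h2 | h2
      · exact hne _ _ hxy (h1.trans h2.symm)
      · exact hadj y h2 (by rw [Sym2.eq_swap, ← h1]; exact hxy)
      · exact hadj x h1 (by rw [← h2]; exact hxy)
      · exact hJ2 x h1 y h2 hxy
    · rw [Finset.card_insert_of_notMem hvJ, mul_add]
      omega

lemma aux_max {V : Type} [Fintype V] (G : SimpleGraph V) (S : Finset V) (L : ℕ) :
    ∃ E I, AuxModel G S L E I ∧ (∀ e ∈ E, (I e).card ≤ L - 1) ∧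
      ∀ x ∈ S, ∀ y ∈ S, x ≠ y → ∀ p : G.Walk x y, p.length ≤ L →
        (∀ w ∈ p.support, w ≠ x → w ≠ y → w ∉ S ∧ ∀ e ∈ E, w ∉ I e) → s(x, y) ∈ E := by
  classical
  let A : Set (Finset (Sym2 V)) :=
    {E | ∃ I, AuxModel G S L E I ∧ (∀ e ∈ E, (I e).card ≤ L - 1)}
  have hA : A.Nonempty := ⟨∅, fun _ => ∅, by constructor <;> simp, by simp⟩
  obtain ⟨E, hE⟩ := (Set.toFinite A).exists_maximal hA
  obtain ⟨I, hI, hc⟩ := hE.prop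
  refine ⟨E, I, hI, hc, ?_⟩
  intro x hx y hy hxy p hp hw
  by_contra hnot
  let q := p.bypass
  have hq : q.IsPath := p.bypass_isPath
  have hql : q.length ≤ L := p.length_bypass_le_length.trans hp
  have hqs : ∀ w ∈ q.support, w ≠ x → w ≠ y → w ∉ S ∧ ∀ e ∈ E, w ∉ I e :=
    fun w h => hw w (p.support_bypass_subset_support h)
  let X : Finset V := (q.support.toFinset.erase x).erase y
  have hX : ∀ w, w ∈ X ↔ w ≠ y ∧ w ≠ x ∧ w ∈ q.support := by
    intro w; simp [X]
  have hXc : X.card ≤ L - 1 := by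
    have h1 : q.support.toFinset.card = q.length + 1 := by
      rw [List.toFinset_card_of_nodup hq.support_nodup, SimpleGraph.Walk.length_support]
    have h2 : X.card = q.support.toFinset.card - 1 - 1 := by
      rw [Finset.card_erase_of_mem, Finset.card_erase_of_mem]
      · simp
      · simp [hxy.symm]
    omega
  let I' : Sym2 V → Finset V := fun e => if e = s(x, y) then X else I e
  have hI'new : I' s(x, y) = X := by simp [I']
  have hI'old : ∀ e ∈ E, I' e = I e := by
    intro e he
    have : e ≠ s(x, y) := fun hh => hnot (hh ▸ he)
    simp [I', this]
  have hXS : ∀ w ∈ X, w ∉ S ∧ ∀ e ∈ E, w ∉ I e := by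
    intro w hw'
    obtain ⟨h1, h2, h3⟩ := (hX w).1 hw'
    exact hqs w h3 h2 h1
  have hconn : AuxConn G L X x y := by
    refine ⟨q, hql, fun w hw' => ?_⟩
    rw [hX]
    tauto
  have hmem : insert s(x, y) E ∈ A := by
    refine ⟨I', ⟨?_, ?_, ?_, ?_, ?_⟩, ?_⟩
    · intro a b hab
      rcases Finset.mem_insert.1 hab with h | h
      · rcases Sym2.eq_iff.1 h with ⟨rfl, rfl⟩ | ⟨rfl, rfl⟩
        · exact hxy
        · exact hxy.symm
      · exact hI.ne _ _ h
    · intro a b hab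
      rcases Finset.mem_insert.1 hab with h | h
      · rcases Sym2.eq_iff.1 h with ⟨rfl, rfl⟩ | ⟨rfl, rfl⟩
        · exact hx
        · exact hy
      · exact hI.mem _ _ h
    · intro a b hab
      rcases Finset.mem_insert.1 hab with h | h
      · rw [h, hI'new]
        rcases Sym2.eq_iff.1 h with ⟨rfl, rfl⟩ | ⟨rfl, rfl⟩
        · exact hconn
        · exact hconn.symm
      · rw [hI'old _ h]
        exact hI.conn _ _ h
    · intro e he w hw'
      rcases Finset.mem_insert.1 he with h | h
      · rw [h, hI'new] at hw'
        exact (hXS w hw').1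
      · rw [hI'old _ h] at hw'
        exact hI.notB _ h w hw'
    · intro e he e' he' hne w hw1 hw2
      rcases Finset.mem_insert.1 he with h | h <;> rcases Finset.mem_insert.1 he' with h' | h'
      · exact hne (h.trans h'.symm)
      · rw [h, hI'new] at hw1
        rw [hI'old _ h'] at hw2
        exact (hXS w hw1).2 _ h' hw2
      · rw [h', hI'new] at hw2
        rw [hI'old _ h] at hw1
        exact (hXS w hw2).2 _ h hw1
      · rw [hI'old _ h'] at hw2
        rw [hI'old _ h] at hw1
        exact hI.disj _ h _ h' hne w hw1 hw2
    · intro e he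
      rcases Finset.mem_insert.1 he with h | h
      · rw [h, hI'new]; exact hXc
      · rw [hI'old _ h]; exact hc e h
  exact hnot (hE.le_of_ge hmem (Finset.subset_insert _ _) (Finset.mem_insert_self _ _))

lemma aux_bconn {V : Type} (G : SimpleGraph V) (S : Set V) (u : V) (r k : ℕ) (hk0 : 0 < k)
    (hk : k ≤ bconn G S u r) : BConnGE G S u r k := by
  have hb : BConnGE G S u r (bconn G S u r) := by
    have hne : {m : ℕ | BConnGE G S u r m}.Nonempty := by
      by_contra hcon
      rw [Set.not_nonempty_iff_eq_empty] at hcon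
      rw [bconn, hcon, csSup_empty, bot_eq_zero] at hk
      omega
    have hbd : BddAbove {m : ℕ | BConnGE G S u r m} := by
      by_contra hcon
      rw [bconn, Nat.sSup_of_not_bddAbove hcon] at hk
      omega
    exact Nat.sSup_mem hne hbd
  obtain ⟨t, P, h1, h2, h3, h4, h5⟩ := hb
  refine ⟨fun i => t (Fin.castLE hk i), fun i => P (Fin.castLE hk i), fun i => h1 _, fun i => h2 _,
    fun i => h3 _, fun i => h4 _, fun i j hij => h5 _ _ ?_⟩
  intro hh
  exact hij (Fin.castLE_injective hk hh)

/-- Main combinatorial statement over the naturals. -/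
lemma aux_main {V : Type} [Fintype V] (G : SimpleGraph V) (r d k : ℕ)
    (S T : Finset V) (hTS : T ⊆ S) (hT : ∀ v ∈ T, BConnGE G (S : Set V) v (r + 1) k)
    (hk : ∀ j : ℕ, T.card ≤ (2 * d + 1) * j → d * (S.card + d * S.card * (2 * r)) < j * k) :
    HasDepthTopMinorDensityGT G r (d : ℝ) := by
  classical
  obtain ⟨E, I, hM, hc, hmax⟩ := aux_max G S (2 * r + 1)
  by_cases hsp : ∀ T ⊆ S, ∀ F ⊆ E, (∀ e ∈ F, ∀ x ∈ e, x ∈ T) → F.card ≤ d * T.card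
  swap
  · push Not at hsp
    obtain ⟨T', hT'S, F, hFE, hF, hlt⟩ := hsp
    refine AuxModel.dense (B := T') (E := F) (I := I) ⟨?_, ?_, ?_, ?_, ?_⟩ d hlt
    · exact fun x y h => hM.ne _ _ (hFE h)
    · exact fun x y h => hF _ h x (by simp)
    · exact fun x y h => hM.conn _ _ (hFE h)
    · exact fun e he w hw hw' => hM.notB e (hFE he) w hw (hT'S hw')
    · exact fun e he e' he' => hM.disj e (hFE he) e' (hFE he')
  obtain ⟨J, hJT, hJ, hJc⟩ := aux_indep E S d hM.ne hsp _ T le_rfl hTS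
  let M := E.biUnion I
  let N := S ∪ M
  have hSN : S ⊆ N := Finset.subset_union_left
  have hMc : M.card ≤ d * S.card * (2 * r) := by
    have h1 : E.card ≤ d * S.card := by
      apply hsp S subset_rfl E subset_rfl
      intro e he x hx
      obtain ⟨y, rfl⟩ := hx
      exact hM.mem _ _ he
    have h2 : M.card ≤ E.card * (2 * r) := Finset.card_biUnion_le_card_mul _ _ _ hc
    exact h2.trans (Nat.mul_le_mul_right _ h1)
  have hNc : N.card ≤ S.card + d * S.card * (2 * r) :=
    (Finset.card_union_le _ _).trans (by omega)
  have hJS : ∀ v ∈ J, v ∈ S := fun v hv => hTS (hJT hv)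
  -- no path between vertices of `J`
  have hno : ∀ x ∈ J, ∀ y ∈ J, x ≠ y → ∀ p : G.Walk x y, p.length ≤ 2 * r + 1 →
      (∀ w ∈ p.support, w ≠ x → w ≠ y → w ∉ N) → False := by
    intro x hx y hy hxy p hp hw
    refine hJ x hx y hy (hmax x (hJS x hx) y (hJS y hy) hxy p hp ?_)
    intro w h1 h2 h3
    have := hw w h1 h2 h3
    simp only [N, M, Finset.mem_union, Finset.mem_biUnion, not_or, not_exists, not_and] at this
    exact this
  have hfan : ∀ v : {v // v ∈ J}, ∃ (y : Fin k → V) (q : ∀ i, G.Walk v.1 (y i)),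
      (∀ i, (q i).IsPath) ∧ (∀ i, (q i).length ≤ r + 1) ∧ (∀ i, y i ∈ N) ∧ (∀ i, y i ≠ v.1) ∧
      (∀ i, ∀ w ∈ (q i).support, w ≠ v.1 → w ≠ y i → w ∉ N) ∧
      (∀ i j, i ≠ j → ∀ w ∈ (q i).support, w ∈ (q j).support → w = v.1) := by
    rintro ⟨v, hv⟩
    obtain ⟨t, P, h1, h2, h3, h4, h5⟩ := hT v (hJT hv)
    have := fun i => aux_trunc N _ (P i) le_rfl (hSN (h3 i).1) (h3 i).2
    choose y q a1 a2 a3 a4 a5 a6 using this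
    exact ⟨y, q, a1, fun i => (a2 i).trans (h2 i), a4, a5, a6,
      fun i j hij w hw hw' => h5 i j hij w (a3 i hw) (a3 j hw')⟩
  choose y q b1 b2 b3 b4 b5 b6 using hfan
  let ed : {v // v ∈ J} × Fin k → Sym2 V := fun c => s(c.1.1, y c.1 c.2)
  let X : {v // v ∈ J} × Fin k → Finset V :=
    fun c => ((q c.1 c.2).support.toFinset.erase c.1.1).erase (y c.1 c.2)
  have hX : ∀ c w, w ∈ X c ↔ w ≠ y c.1 c.2 ∧ w ≠ c.1.1 ∧ w ∈ (q c.1 c.2).support := by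
    intro c w; simp [X]
  have hXN : ∀ c, ∀ w ∈ X c, w ∉ N := by
    intro c w hw
    obtain ⟨h1, h2, h3⟩ := (hX c w).1 hw
    exact b5 _ _ w h3 h2 h1
  have hXd : ∀ c c', c ≠ c' → ∀ w ∈ X c, w ∉ X c' := by
    rintro ⟨v, i⟩ ⟨v', i'⟩ hcc w hw hw'
    have hwN := hXN _ w hw
    obtain ⟨h1, h2, h3⟩ := (hX _ w).1 hw
    obtain ⟨h1', h2', h3'⟩ := (hX _ w).1 hw'
    dsimp only at h1 h2 h3 h1' h2' h3'
    by_cases hv : v = v'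
    · subst hv
      have hii : i ≠ i' := fun h => hcc (by rw [h])
      exact h2 (b6 v i i' hii w h3 h3')
    · have hvv : v.1 ≠ v'.1 := fun h => hv (Subtype.ext h)
      have l1 := (q v i).length_takeUntil_lt_length h3 h1
      have l2 := (q v' i').length_takeUntil_lt_length h3' h1'
      have l3 := b2 v i
      have l4 := b2 v' i'
      refine hno v.1 v.2 v'.1 v'.2 hvv
        (((q v i).takeUntil w h3).append ((q v' i').takeUntil w h3').reverse) ?_ ?_
      · rw [SimpleGraph.Walk.length_append, SimpleGraph.Walk.length_reverse]
        omega
      · intro z hz hz1 hz2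
        rw [SimpleGraph.Walk.mem_support_append_iff, SimpleGraph.Walk.support_reverse,
          List.mem_reverse] at hz
        rcases hz with hz | hz
        · refine b5 v i z ((q v i).support_takeUntil_subset_support h3 hz) hz1 ?_
          rintro rfl
          exact SimpleGraph.Walk.endpoint_notMem_support_takeUntil (b1 v i) h3 h1.symm hz
        · refine b5 v' i' z ((q v' i').support_takeUntil_subset_support h3' hz) hz2 ?_
          rintro rfl
          exact SimpleGraph.Walk.endpoint_notMem_support_takeUntil (b1 v' i') h3' h1'.symm hz
  have hed : Function.Injective ed := by
    rintro ⟨v, i⟩ ⟨v', i'⟩ h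
    have hyJ : ∀ v i, y v i ∉ J := by
      intro v i hh
      exact hno v.1 v.2 _ hh (b4 v i).symm (q v i) ((b2 v i).trans (by omega)) (b5 v i)
    rcases Sym2.eq_iff.1 h with ⟨h1, h2⟩ | ⟨h1, h2⟩
    · dsimp only at h1 h2
      have hv := Subtype.ext h1
      subst hv
      by_cases hii : i = i'
      · rw [hii]
      · exfalso
        refine b4 v i (b6 v i i' hii _ (SimpleGraph.Walk.end_mem_support _) ?_)
        rw [h2]
        exact SimpleGraph.Walk.end_mem_support _
    · dsimp only at h1 h2
      exact absurd v.2 (h1 ▸ hyJ v' i')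
  let E2 : Finset (Sym2 V) := Finset.univ.image ed
  let I2 : Sym2 V → Finset V := Function.extend ed X (fun _ => ∅)
  have hI2 : ∀ c, I2 (ed c) = X c := fun c => hed.extend_apply _ _ _
  have hE2 : ∀ e ∈ E2, ∃ c, ed c = e := by
    intro e he
    simpa [E2] using he
  have hE2c : E2.card = J.card * k := by
    rw [Finset.card_image_of_injective _ hed]
    simp
  have hconn : ∀ c, AuxConn G (2 * r + 1) (X c) c.1.1 (y c.1 c.2) := by
    intro c
    refine ⟨q c.1 c.2, (b2 _ _).trans (by omega), fun w hw => ?_⟩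
    rw [hX]
    tauto
  have hmodel : AuxModel G N (2 * r + 1) E2 I2 := by
    refine ⟨?_, ?_, ?_, ?_, ?_⟩
    · intro a b hab
      obtain ⟨c, hc⟩ := hE2 _ hab
      rcases Sym2.eq_iff.1 hc with ⟨rfl, rfl⟩ | ⟨rfl, rfl⟩
      · exact (b4 _ _).symm
      · exact b4 _ _
    · intro a b hab
      obtain ⟨c, hc⟩ := hE2 _ hab
      rcases Sym2.eq_iff.1 hc with ⟨rfl, rfl⟩ | ⟨rfl, rfl⟩
      · exact hSN (hJS _ c.1.2)
      · exact b3 _ _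
    · intro a b hab
      obtain ⟨c, hc⟩ := hE2 _ hab
      rw [← hc, hI2]
      rcases Sym2.eq_iff.1 hc with ⟨rfl, rfl⟩ | ⟨rfl, rfl⟩
      · exact hconn c
      · exact (hconn c).symm
    · intro e he w hw
      obtain ⟨c, rfl⟩ := hE2 _ he
      rw [hI2] at hw
      exact hXN c w hw
    · intro e he e' he' hne w hw hw'
      obtain ⟨c, rfl⟩ := hE2 _ he
      obtain ⟨c', rfl⟩ := hE2 _ he'
      rw [hI2] at hw hw'
      exact hXd c c' (fun h => hne (by rw [h])) w hw hw'
  refine hmodel.dense d ?_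
  rw [hE2c]
  exact (Nat.mul_le_mul_left d hNc).trans_lt (hk _ hJc)

theorem stmt3 {V : Type} [Fintype V] (G : SimpleGraph V) (ε : ℝ) (hε : 0 < ε)
    (r d : ℕ) (hr : 1 ≤ r) (hd : 1 ≤ d) (S : Set V) (hS : S.Nonempty)
    (hb : ε * (S.ncard : ℝ) ≤
      (({v ∈ S | 6 * ε⁻¹ * (r : ℝ) * (d : ℝ) ^ 3 < (bconn G S v r : ℝ)}.ncard : ℝ))) :
    HasDepthTopMinorDensityGT G (r - 1) (d : ℝ) := by
  classical
  obtain ⟨r, rfl⟩ : ∃ r', r = r' + 1 := ⟨r - 1, by omega⟩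
  rw [Nat.add_sub_cancel]
  set x : ℝ := 6 * ε⁻¹ * ((r + 1 : ℕ) : ℝ) * (d : ℝ) ^ 3 with hx
  have hx0 : 0 ≤ x := by positivity
  set A : Set V := {v ∈ S | x < (bconn G S v (r + 1) : ℝ)} with hA
  have hkx : x < ((⌊x⌋₊ + 1 : ℕ) : ℝ) := by
    push_cast
    exact Nat.lt_floor_add_one x
  refine aux_main G r d (⌊x⌋₊ + 1) S.toFinset A.toFinset ?_ ?_ ?_
  · intro v hv
    rw [Set.mem_toFinset] at hv ⊢
    exact hv.1
  · intro v hv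
    rw [Set.mem_toFinset] at hv
    rw [Set.coe_toFinset]
    exact aux_bconn G S v (r + 1) _ (Nat.succ_pos _)
      (Nat.succ_le_of_lt ((Nat.floor_lt hx0).2 hv.2))
  · intro j hj
    rw [← Set.ncard_eq_toFinset_card'] at hj ⊢
    have hSpos : (0 : ℝ) < S.ncard := by
      exact_mod_cast (Set.ncard_pos (Set.toFinite S)).2 hS
    have hd1 : (1 : ℝ) ≤ d := by exact_mod_cast hd
    have hj' : (A.ncard : ℝ) ≤ (2 * d + 1) * j := by exact_mod_cast hj
    have h1 : ε * (S.ncard : ℝ) ≤ (2 * d + 1) * j := hb.trans hj'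
    have hjpos : (0 : ℝ) < j := by
      have : (0 : ℝ) < (2 * d + 1) * j := (mul_pos hε hSpos).trans_le h1
      exact pos_of_mul_pos_right this (by positivity)
    have h2 : (S.ncard : ℝ) ≤ ε⁻¹ * (3 * d * j) := by
      rw [le_inv_mul_iff₀ hε]
      refine h1.trans ?_
      have : (2 * d + 1 : ℝ) ≤ 3 * d := by linarith
      exact mul_le_mul_of_nonneg_right this hjpos.le
    have h3 : (d : ℝ) * (S.ncard + d * S.ncard * (2 * r)) ≤ j * x := by
      calc (d : ℝ) * (S.ncard + d * S.ncard * (2 * r))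
          = S.ncard * (d * (1 + 2 * d * r)) := by ring
        _ ≤ S.ncard * (d * (2 * d * (r + 1))) := by
            gcongr
            nlinarith
        _ ≤ (ε⁻¹ * (3 * d * j)) * (d * (2 * d * (r + 1))) := by gcongr
        _ = j * x := by rw [hx]; push_cast; ring
    have h4 : (j : ℝ) * x < j * ((⌊x⌋₊ + 1 : ℕ) : ℝ) := mul_lt_mul_of_pos_left hkx hjpos
    have h5 := h3.trans_lt h4
    exact_mod_cast h5
end

section
/- Let r ≥ 1 and d ≥ 1 be integers and let G be a finite simple graph such that every depth-(r−1) topological minor of G has edge density at most d. Then adm_r(G) ≤ 6rd³, i.e., G has a vertex ordering σ with adm_r(G,σ) ≤ 6rd³. -/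
/-- The `r`-admissibility `adm_r(G,σ)` of a vertex ordering `σ` (an injective map `V → ℕ`):
the maximum over vertices `v` of `bconn_r({u : σ u ≤ σ v}, v)`. -/
noncomputable def admOrd {V : Type} [Fintype V] (G : SimpleGraph V) (σ : V → ℕ) (r : ℕ) : ℕ :=
  Finset.univ.sup fun v => bconn G {u | σ u ≤ σ v} v r

open Classical in
/-- `a` and `b` are joined by a walk of length at most `k` with interior inside `I`. -/
def ConnIn {V : Type} (G : SimpleGraph V) (k : ℕ) (a b : V) (I : Finset V) : Prop :=
  ∃ p : G.Walk a b, p.length ≤ k ∧ ∀ w ∈ p.support, w = a ∨ w = b ∨ w ∈ I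

theorem ConnIn.symm {V : Type} {G : SimpleGraph V} {k : ℕ} {a b : V} {I : Finset V}
    (h : ConnIn G k a b I) : ConnIn G k b a I := by
  obtain ⟨p, hp, hs⟩ := h
  refine ⟨p.reverse, by simpa using hp, fun w hw => ?_⟩
  have := hs w (by simpa using hw)
  tauto

open Classical in
theorem ConnIn.toPath {V : Type} {G : SimpleGraph V} {k : ℕ} {a b : V} {I : Finset V}
    (h : ConnIn G k a b I) :
    ∃ p : G.Walk a b, p.IsPath ∧ p.length ≤ k ∧ ∀ w ∈ p.support, w = a ∨ w = b ∨ w ∈ I := by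
  obtain ⟨p, hp, hs⟩ := h
  exact ⟨p.bypass, p.bypass_isPath, p.length_bypass_le_length.trans hp,
    fun w hw => hs w (p.support_bypass_subset_support hw)⟩

open Classical in
theorem ConnIn.shrink {V : Type} {G : SimpleGraph V} {k : ℕ} {a b : V} {I : Finset V}
    (h : ConnIn G (k + 1) a b I) (hab : a ≠ b) :
    ∃ J ⊆ I, J.card ≤ k ∧ ConnIn G (k + 1) a b J := by
  obtain ⟨p, hpp, hp, hs⟩ := h.toPath
  refine ⟨(p.support.toFinset.erase a).erase b, ?_, ?_, p, hp, ?_⟩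
  · intro w hw
    simp only [Finset.mem_erase, List.mem_toFinset] at hw
    have := hs w hw.2.2
    tauto
  · rw [Finset.card_erase_of_mem, Finset.card_erase_of_mem]
    · have := p.support.toFinset_card_le
      rw [SimpleGraph.Walk.length_support] at this
      omega
    · simp
    · simp [hab.symm]
  · intro w hw
    simp only [Finset.mem_erase, List.mem_toFinset]
    tauto

theorem exists_first_hit {V : Type} {G : SimpleGraph V} (X : Set V) {u t : V} (p : G.Walk u t)
    (ht : t ∈ X) : ∃ (m : V) (q : G.Walk u m), m ∈ X ∧ q.length ≤ p.length ∧
      (∀ w ∈ q.support, w ∈ p.support) ∧ ∀ w ∈ q.support, w ≠ m → w ∉ X := by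
  induction p with
  | nil => exact ⟨_, .nil, ht, by simp, by simp, by simp⟩
  | @cons u v t h p ih =>
    by_cases hu : u ∈ X
    · exact ⟨u, .nil, hu, by simp, by simp, by simp⟩
    · obtain ⟨m, q, h1, h2, h3, h4⟩ := ih ht
      refine ⟨m, .cons h q, h1, by simpa using h2, ?_, ?_⟩
      · intro w hw
        simp only [SimpleGraph.Walk.support_cons, List.mem_cons] at hw ⊢
        exact hw.imp id (h3 w)
      · intro w hw
        simp only [SimpleGraph.Walk.support_cons, List.mem_cons] at hw
        rcases hw with rfl | hw
        · exact fun _ => hu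
        · exact h4 w hw

open Classical in
theorem density_bound {V : Type} (G : SimpleGraph V) (r d : ℕ)
    (hminor : ¬ HasDepthTopMinorDensityGT G r (d : ℝ))
    {ι : Type} (E : Finset ι) (B : Finset V) (s t : ι → V) (I : ι → Finset V)
    (hs : ∀ e ∈ E, s e ∈ B) (ht : ∀ e ∈ E, t e ∈ B) (hst : ∀ e ∈ E, s e ≠ t e)
    (hinj : ∀ e ∈ E, ∀ e' ∈ E, s(s e, t e) = s(s e', t e') → e = e')
    (hIB : ∀ e ∈ E, ∀ w ∈ I e, w ∉ B)
    (hII : ∀ e ∈ E, ∀ e' ∈ E, e ≠ e' → ∀ w ∈ I e, w ∉ I e')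
    (hc : ∀ e ∈ E, ConnIn G (2 * r + 1) (s e) (t e) (I e)) :
    E.card ≤ d * B.card := by
  by_contra hlt
  push Not at hlt
  apply hminor
  have hB : 0 < B.card := by
    have : E.Nonempty := Finset.card_pos.1 (by omega)
    obtain ⟨e, he⟩ := this
    exact Finset.card_pos.2 ⟨_, hs e he⟩
  let f : Fin B.card → V := fun x => (B.equivFin.symm x : V)
  have hf : Function.Injective f := fun x y h => B.equivFin.symm.injective (Subtype.ext h)
  have hfB : ∀ x, f x ∈ B := fun x => (B.equivFin.symm x).2
  have hfs : ∀ v ∈ B, ∃ x, f x = v := fun v hv => ⟨B.equivFin ⟨v, hv⟩, by simp [f]⟩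
  let H : SimpleGraph (Fin B.card) :=
    { Adj := fun x y => x ≠ y ∧ ∃ e ∈ E, s(s e, t e) = s(f x, f y)
      symm := ⟨fun x y h => ⟨h.1.symm, by
        obtain ⟨e, he, h2⟩ := h.2
        exact ⟨e, he, h2.trans Sym2.eq_swap⟩⟩⟩
      loopless := ⟨fun x h => h.1 rfl⟩ }
  have key : ∀ (x y : Fin B.card), H.Adj x y → ∃ e ∈ E, s(s e, t e) = s(f x, f y) ∧
      ∃ p : G.Walk (f x) (f y), p.IsPath ∧ p.length ≤ 2 * r + 1 ∧
        ∀ w ∈ p.support, w = f x ∨ w = f y ∨ w ∈ I e := by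
    intro x y h
    obtain ⟨e, he, h2⟩ := h.2
    refine ⟨e, he, h2, ConnIn.toPath ?_⟩
    rcases Sym2.eq_iff.1 h2 with ⟨h3, h4⟩ | ⟨h3, h4⟩
    · rw [← h3, ← h4]; exact hc e he
    · rw [← h3, ← h4]; exact (hc e he).symm
  choose e he h2 p hp hl hsup using key
  refine ⟨B.card, H, hB, ?_, f, fun x y _ h => p x y h, hf, fun x y _ h => hp x y h,
    fun x y _ h => hl x y h, ?_, ?_⟩
  · rw [lt_div_iff₀ (by exact_mod_cast hB)]
    have h1 : E.card ≤ H.edgeSet.ncard := by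
      choose g hg using hfs
      have hfin : H.edgeSet.Finite := Set.toFinite _
      rw [← Set.ncard_coe_finset E]
      have hEx : ∀ e ∈ E, ∃ z : Sym2 (Fin B.card), z ∈ H.edgeSet ∧ z.map f = s(s e, t e) := by
        intro e he
        refine ⟨s(g _ (hs e he), g _ (ht e he)), ?_, by simp [hg]⟩
        refine ⟨fun h => hst e he ?_, e, he, by simp [hg]⟩
        have h' : g _ (hs e he) = g _ (ht e he) := h
        rw [← hg _ (hs e he), h', hg]
      haveI : Nonempty (Sym2 (Fin B.card)) := ⟨s(⟨0, hB⟩, ⟨0, hB⟩)⟩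
      choose! z hz1 hz2 using hEx
      refine Set.ncard_le_ncard_of_injOn z (fun e he => hz1 e he) ?_ hfin
      intro e he e' he' h
      apply hinj e he e' he'
      rw [← hz2 e he, ← hz2 e' he', h]
    exact_mod_cast lt_of_lt_of_le hlt h1
  · intro x y hxy h w hw h1 h3 c hwc
    rcases hsup x y h w hw with h4 | h4 | h4
    · exact h1 h4
    · exact h3 h4
    · exact hIB _ (he x y h) w h4 (hwc ▸ hfB c)
  · intro x y hxy h x' y' hxy' h' hne w hw hw'
    by_contra hcon
    push Not at hcon
    have hwI : w ∈ I (e x y h) := by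
      have := hsup x y h w hw
      tauto
    have hwB := hIB _ (he x y h) w hwI
    have hwI' : w ∈ I (e x' y' h') := by
      rcases hsup x' y' h' w hw' with h4 | h4 | h4
      · exact absurd (h4 ▸ hfB _) hwB
      · exact absurd (h4 ▸ hfB _) hwB
      · exact h4
    refine hII _ (he x y h) _ (he x' y' h') ?_ w hwI hwI'
    intro hee
    have h5 := h2 x y h
    rw [hee, h2 x' y' h'] at h5
    rcases Sym2.eq_iff.1 h5 with ⟨h6, h7⟩ | ⟨h6, h7⟩
    · exact hne (by rw [hf h6, hf h7])
    · have := hf h6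
      have := hf h7
      subst_vars
      exact absurd hxy (not_lt.2 hxy'.le)

open Classical in
/-- A valid family of paths between vertices of `S`. -/
def ValidFam {V : Type} (G : SimpleGraph V) (r : ℕ) (S : Finset V) (E : Finset (V × V))
    (I : V × V → Finset V) : Prop :=
  (∀ e ∈ E, e.1 ∈ S) ∧ (∀ e ∈ E, e.2 ∈ S) ∧ (∀ e ∈ E, e.1 ≠ e.2) ∧
  (∀ e ∈ E, ∀ e' ∈ E, s(e.1, e.2) = s(e'.1, e'.2) → e = e') ∧
  (∀ e ∈ E, ∀ w ∈ I e, w ∉ S) ∧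
  (∀ e ∈ E, ∀ e' ∈ E, e ≠ e' → ∀ w ∈ I e, w ∉ I e') ∧
  (∀ e ∈ E, ConnIn G (2 * r + 1) e.1 e.2 (I e)) ∧
  (∀ e ∈ E, (I e).card ≤ 2 * r)

open Classical in
/-- Greedy independent sets. -/
theorem exists_indep {V : Type} (d : ℕ) (S : Finset V) (E : Finset (V × V))
    (hE : ∀ T ⊆ S, (E.filter fun e => e.1 ∈ T ∧ e.2 ∈ T).card ≤ d * T.card) :
    ∀ T ⊆ S, ∃ R ⊆ T, T.card ≤ (2 * d + 1) * R.card ∧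
      ∀ a ∈ R, ∀ b ∈ R, a ≠ b → (a, b) ∉ E := by
  intro T
  induction T using Finset.strongInduction with
  | H T ih =>
    intro hT
    rcases T.eq_empty_or_nonempty with rfl | hne
    · exact ⟨∅, by simp, by simp, by simp⟩
    let N : V → Finset V := fun v => T.filter fun w => (v, w) ∈ E ∨ (w, v) ∈ E
    have hv : ∃ v ∈ T, (N v).card ≤ 2 * d := by
      apply Finset.exists_le_of_sum_le hne
      rw [Finset.sum_const, smul_eq_mul]
      have h1 : ∀ v ∈ T, (N v).card ≤ (T.filter fun w => (v, w) ∈ E).card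
          + (T.filter fun w => (w, v) ∈ E).card := by
        intro v _
        simp only [N, Finset.filter_or]
        exact Finset.card_union_le _ _
      refine (Finset.sum_le_sum h1).trans ?_
      rw [Finset.sum_add_distrib]
      have h2 : ∑ v ∈ T, (T.filter fun w => (v, w) ∈ E).card ≤
          (E.filter fun e => e.1 ∈ T ∧ e.2 ∈ T).card := by
        rw [← Finset.card_sigma]
        refine Finset.card_le_card_of_injOn (fun x => (x.1, x.2)) ?_ ?_
        · intro x hx
          simp at hx ⊢
          tauto
        · rintro ⟨a, b⟩ _ ⟨c, e⟩ _ h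
          simp at h ⊢
          exact h
      have h3 : ∑ v ∈ T, (T.filter fun w => (w, v) ∈ E).card ≤
          (E.filter fun e => e.1 ∈ T ∧ e.2 ∈ T).card := by
        rw [← Finset.card_sigma]
        refine Finset.card_le_card_of_injOn (fun x => (x.2, x.1)) ?_ ?_
        · intro x hx
          simp at hx ⊢
          tauto
        · rintro ⟨a, b⟩ _ ⟨c, e⟩ _ h
          simp at h ⊢
          tauto
      have := hE T hT
      nlinarith
    obtain ⟨v, hvT, hvN⟩ := hv
    let T' := T \ (insert v (N v))
    have hT'T : T' ⊆ T := Finset.sdiff_subset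
    obtain ⟨R, hR, hcard, hind⟩ := ih T' (Finset.ssubset_iff_subset_ne.2 ⟨hT'T, fun h => by
      have : v ∈ T' := h ▸ hvT
      simp [T'] at this⟩) (hT'T.trans hT)
    have hvR : v ∉ R := fun h => by
      have := hR h
      simp [T'] at this
    have hnon : ∀ b ∈ R, (v, b) ∉ E ∧ (b, v) ∉ E := by
      intro b hb
      have := hR hb
      simp only [T', N, Finset.mem_sdiff, Finset.mem_insert, Finset.mem_filter] at this
      tauto
    refine ⟨insert v R, ?_, ?_, ?_⟩
    · exact Finset.insert_subset hvT (hR.trans hT'T)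
    · rw [Finset.card_insert_of_notMem hvR]
      have h1 : T.card ≤ T'.card + (insert v (N v)).card := by
        have : T.card - (insert v (N v)).card ≤ T'.card :=
          Finset.le_card_sdiff (insert v (N v)) T
        omega
      have h2 := Finset.card_insert_le v (N v)
      nlinarith
    · intro a ha b hb hab
      rcases Finset.mem_insert.1 ha with ha1 | ha1
      · rcases Finset.mem_insert.1 hb with hb1 | hb1
        · exact absurd (ha1.trans hb1.symm) hab
        · rw [ha1]; exact (hnon b hb1).1
      · rcases Finset.mem_insert.1 hb with hb1 | hb1
        · rw [hb1]; exact (hnon a ha1).2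
        · exact hind a ha1 b hb1 hab

open Classical in
theorem exists_order {V : Type} (G : SimpleGraph V) (r l : ℕ)
    (h : ∀ S : Finset V, S.Nonempty → ∃ v ∈ S, ¬ BConnGE G (S : Set V) v r l) (n : ℕ) :
    ∀ S : Finset V, S.card = n → ∃ σ : V → ℕ, Set.InjOn σ S ∧ (∀ v ∈ S, σ v < n) ∧
      ∀ v ∈ S, ¬ BConnGE G {u | u ∈ S ∧ σ u ≤ σ v} v r l := by
  induction n with
  | zero =>
    intro S hS
    rw [Finset.card_eq_zero] at hS
    subst hS
    exact ⟨fun _ => 0, by simp, by simp, by simp⟩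
  | succ n ih =>
    intro S hS
    obtain ⟨v, hv, hb⟩ := h S (Finset.card_pos.1 (by omega))
    obtain ⟨σ, h1, h2, h3⟩ := ih (S.erase v) (by rw [Finset.card_erase_of_mem hv]; omega)
    have hlt : ∀ w ∈ S, w ≠ v → σ w < n := fun w hw hne => h2 w (by simp [hw, hne])
    refine ⟨Function.update σ v n, ?_, ?_, ?_⟩
    · intro a ha b hb hab
      have ha' : a ∈ S := ha
      have hb' : b ∈ S := hb
      by_cases hav : a = v <;> by_cases hbv : b = v
      · rw [hav, hbv]
      · have := hlt b hb' hbv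
        subst hav
        simp [Function.update_of_ne hbv] at hab
        omega
      · have := hlt a ha' hav
        subst hbv
        simp [Function.update_of_ne hav] at hab
        omega
      · simp [Function.update_of_ne hav, Function.update_of_ne hbv] at hab
        exact h1 (by simp [hav, ha']) (by simp [hbv, hb']) hab
    · intro w hw
      by_cases hwv : w = v
      · subst hwv; simp
      · have := hlt w hw hwv
        simp [Function.update_of_ne hwv]
        omega
    · intro w hw
      by_cases hwv : w = v
      · subst hwv
        convert hb using 2
        ext u
        simp only [Set.mem_ofPred_eq, Finset.mem_coe, and_iff_left_iff_imp]
        intro hu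
        by_cases huv : u = w
        · subst huv; simp
        · have := hlt u hu huv
          simp [Function.update_of_ne huv]
          omega
      · convert h3 w (by simp [hw, hwv]) using 2
        ext u
        simp only [Set.mem_ofPred_eq, Finset.mem_erase]
        have hw' := hlt w hw hwv
        by_cases huv : u = v
        · subst huv
          simp [Function.update_of_ne hwv]
          omega
        · simp [Function.update_of_ne hwv, Function.update_of_ne huv, huv]

theorem BConnGE.mono {V : Type} {G : SimpleGraph V} {S : Set V} {u : V} {r m l : ℕ}
    (h : BConnGE G S u r m) (hl : l ≤ m) : BConnGE G S u r l := by
  obtain ⟨t, P, h1, h2, h3, h4, h5⟩ := h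
  refine ⟨fun i => t (Fin.castLE hl i), fun i => P (Fin.castLE hl i), fun i => h1 _,
    fun i => h2 _, fun i => h3 _, fun i => h4 _, fun i j hij => h5 _ _ ?_⟩
  intro h
  exact hij (Fin.castLE_injective hl h)

open Classical in
/-- Key lemma: no set `S` in which every vertex has large back-connectivity. -/
theorem exists_small {V : Type} [Fintype V] (G : SimpleGraph V) (r d : ℕ) (hd : 1 ≤ d)
    (hminor : ¬ HasDepthTopMinorDensityGT G r (d : ℝ)) (S : Finset V) (hS : S.Nonempty) :
    ∃ v ∈ S, ¬ BConnGE G (S : Set V) v (r + 1) (6 * (r + 1) * d ^ 3 + 1) := by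
  by_contra hcon
  push Not at hcon
  set l := 6 * (r + 1) * d ^ 3 + 1 with hl
  -- maximal family
  obtain ⟨E, hE, hmax⟩ := Finset.exists_max_image
    ((Finset.univ : Finset (Finset (V × V))).filter fun E => ∃ I, ValidFam G r S E I)
    Finset.card ⟨∅, by simp [ValidFam]⟩
  obtain ⟨-, I, hI⟩ := Finset.mem_filter.1 hE
  have hmax' : ∀ E', (∃ I, ValidFam G r S E' I) → E'.card ≤ E.card :=
    fun E' h => hmax E' (by simpa using h)
  obtain ⟨i1, i2, i3, i4, i5, i6, i7, i8⟩ := hI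
  set M := E.biUnion I with hM
  -- maximality
  have hadj : ∀ a ∈ S, ∀ b ∈ S, a ≠ b → ∀ J : Finset V, (∀ w ∈ J, w ∉ S ∪ M) →
      ConnIn G (2 * r + 1) a b J → (a, b) ∈ E ∨ (b, a) ∈ E := by
    intro a ha b hb hab J hJ hc
    by_contra hno
    push Not at hno
    obtain ⟨J', hJ', hcard, hc'⟩ := hc.shrink hab
    have hJ2 : ∀ w ∈ J', w ∉ S ∧ ∀ e ∈ E, w ∉ I e := by
      intro w hw
      have := hJ w (hJ' hw)
      simp only [hM, Finset.mem_union, Finset.mem_biUnion, not_or, not_exists, not_and] at this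
      exact this
    have hle := hmax' (insert (a, b) E) ⟨Function.update I (a, b) J', ?_⟩
    · rw [Finset.card_insert_of_notMem hno.1] at hle
      omega
    have hup : ∀ e ∈ E, Function.update I (a, b) J' e = I e := fun e he =>
      Function.update_of_ne (by rintro rfl; exact hno.1 he) _ _
    have hself : Function.update I (a, b) J' (a, b) = J' := Function.update_self _ _ _
    have hsym : ∀ e ∈ E, s(a, b) ≠ s(e.1, e.2) := by
      intro e he h
      rcases Sym2.eq_iff.1 h with ⟨h1, h2⟩ | ⟨h1, h2⟩
      · subst h1 h2; exact hno.1 he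
      · subst h1 h2; exact hno.2 he
    refine ⟨?_, ?_, ?_, ?_, ?_, ?_, ?_, ?_⟩
    · rw [Finset.forall_mem_insert]; exact ⟨ha, i1⟩
    · rw [Finset.forall_mem_insert]; exact ⟨hb, i2⟩
    · rw [Finset.forall_mem_insert]; exact ⟨hab, i3⟩
    · intro e he e' he' h
      rcases Finset.mem_insert.1 he with rfl | he <;> rcases Finset.mem_insert.1 he' with rfl | he'
      · rfl
      · exact absurd h (hsym _ he')
      · exact absurd h.symm (hsym _ he)
      · exact i4 e he e' he' h
    · rw [Finset.forall_mem_insert, hself]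
      refine ⟨fun w hw => (hJ2 w hw).1, fun e he => ?_⟩
      rw [hup e he]; exact i5 e he
    · intro e he e' he' hne w hw
      rcases Finset.mem_insert.1 he with rfl | he <;> rcases Finset.mem_insert.1 he' with rfl | he'
      · exact absurd rfl hne
      · rw [hself] at hw
        rw [hup _ he']
        exact (hJ2 w hw).2 _ he'
      · rw [hup _ he] at hw
        rw [hself]
        exact fun hw' => (hJ2 w hw').2 _ he hw
      · rw [hup _ he] at hw
        rw [hup _ he']
        exact i6 e he e' he' hne w hw
    · rw [Finset.forall_mem_insert, hself]
      refine ⟨hc', fun e he => ?_⟩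
      rw [hup e he]; exact i7 e he
    · rw [Finset.forall_mem_insert, hself]
      refine ⟨hcard, fun e he => ?_⟩
      rw [hup e he]; exact i8 e he
  -- densities
  have hdens : ∀ T ⊆ S, (E.filter fun e => e.1 ∈ T ∧ e.2 ∈ T).card ≤ d * T.card := by
    intro T hT
    have hsub : ∀ e ∈ E.filter (fun e => e.1 ∈ T ∧ e.2 ∈ T), e ∈ E :=
      fun e he => (Finset.mem_filter.1 he).1
    refine density_bound G r d hminor _ T Prod.fst Prod.snd I
      (fun e he => (Finset.mem_filter.1 he).2.1) (fun e he => (Finset.mem_filter.1 he).2.2)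
      (fun e he => i3 e (hsub e he))
      (fun e he e' he' => i4 e (hsub e he) e' (hsub e' he'))
      (fun e he w hw hwT => i5 e (hsub e he) w hw (hT hwT))
      (fun e he e' he' => i6 e (hsub e he) e' (hsub e' he'))
      (fun e he => i7 e (hsub e he))
  have hEcard : E.card ≤ d * S.card := by
    refine density_bound G r d hminor E S Prod.fst Prod.snd I i1 i2 i3 i4 i5 i6 i7
  have hMcard : M.card ≤ E.card * (2 * r) := Finset.card_biUnion_le_card_mul _ _ _ i8
  obtain ⟨R, hRS, hRcard, hRind⟩ := exists_indep d S E hdens S subset_rfl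
  have hRadj : ∀ a ∈ R, ∀ b ∈ R, a ≠ b → ∀ J : Finset V, (∀ w ∈ J, w ∉ S ∪ M) →
      ¬ ConnIn G (2 * r + 1) a b J := by
    intro a ha b hb hab J hJ hc
    rcases hadj a (hRS ha) b (hRS hb) hab J hJ hc with h | h
    · exact hRind a ha b hb hab h
    · exact hRind b hb a ha hab.symm h
  -- segments
  have hseg : ∀ v ∈ S, ∃ (m : Fin l → V) (q : ∀ i, G.Walk v (m i)),
      (∀ i, (q i).IsPath) ∧ (∀ i, m i ∈ S ∪ M ∧ m i ≠ v) ∧ (∀ i, (q i).length ≤ r + 1) ∧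
      (∀ i, ∀ w ∈ (q i).support, w ≠ v → w ≠ m i → w ∉ S ∪ M) ∧
      (∀ i j, i ≠ j → ∀ w ∈ (q i).support, w ∈ (q j).support → w = v) := by
    intro v hv
    obtain ⟨t, P, -, h2, h3, -, h5⟩ := hcon v hv
    have := fun i => exists_first_hit {w | w ∈ S ∪ M ∧ w ≠ v} (P i)
      ⟨Finset.mem_union_left _ (h3 i).1, (h3 i).2⟩
    choose m q q1 q2 q3 q4 using this
    have hsub : ∀ i, ∀ w ∈ (q i).bypass.support, w ∈ (q i).support :=
      fun i w hw => (q i).support_bypass_subset_support hw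
    refine ⟨m, fun i => (q i).bypass, fun i => (q i).bypass_isPath, q1,
      fun i => (q i).length_bypass_le_length.trans ((q2 i).trans (h2 i)), ?_, ?_⟩
    · intro i w hw hwv hwm hwS
      exact q4 i w (hsub i w hw) hwm ⟨hwS, hwv⟩
    · intro i j hij w hw hw'
      exact h5 i j hij w (q3 i w (hsub i w hw)) (q3 j w (hsub j w hw'))
  choose! m q s0 s1 s2 s3 s4 using hseg
  let J : V × Fin l → Finset V := fun x =>
    if h : x.1 ∈ S then (((q x.1 h x.2).support.toFinset.erase x.1).erase (m x.1 x.2)) else ∅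
  have hJ : ∀ v (h : v ∈ S) i w, w ∈ J (v, i) ↔
      w ∈ (q v h i).support ∧ w ≠ v ∧ w ≠ m v i := by
    intro v h i w
    simp only [J, h, dif_pos, Finset.mem_erase, List.mem_toFinset]
    tauto
  have hJSM : ∀ v ∈ S, ∀ i, ∀ w ∈ J (v, i), w ∉ S ∪ M := by
    intro v hv i w hw
    rw [hJ v hv] at hw
    exact s3 v hv i w hw.1 hw.2.1 hw.2.2
  have hconn : ∀ v ∈ S, ∀ i, ConnIn G (2 * r + 1) v (m v i) (J (v, i)) := by
    intro v hv i
    refine ⟨q v hv i, (s2 v hv i).trans (by omega), fun w hw => ?_⟩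
    rw [hJ v hv]
    tauto
  have hconn2 : ∀ v ∈ S, ∀ i, ∀ w ∈ J (v, i), ConnIn G r v w (J (v, i)) := by
    intro v hv i w hw
    have hw' := (hJ v hv i w).1 hw
    have hlt := SimpleGraph.Walk.length_takeUntil_lt_length hw'.1 hw'.2.2
    have := s2 v hv i
    refine ⟨(q v hv i).takeUntil w hw'.1, by omega, fun x hx => ?_⟩
    have hx2 : x ≠ m v i := by
      rintro rfl
      exact SimpleGraph.Walk.endpoint_notMem_support_takeUntil (s0 v hv i) hw'.1 hw'.2.2.symm hx
    have hx3 := (q v hv i).support_takeUntil_subset_support hw'.1 hx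
    rw [hJ v hv]
    tauto
  have hcount := density_bound G r d hminor (R ×ˢ (Finset.univ : Finset (Fin l))) (S ∪ M)
    Prod.fst (fun x => m x.1 x.2) J ?_ ?_ ?_ ?_ ?_ ?_ ?_
  · rw [Finset.card_product, Finset.card_univ, Fintype.card_fin] at hcount
    have hU := Finset.card_union_le S M
    have hR : 0 < R.card := by
      have := Finset.card_pos.2 hS
      by_contra h0
      have : R.card = 0 := by omega
      rw [this] at hRcard
      omega
    have e1 : M.card ≤ d * S.card * (2 * r) := hMcard.trans (Nat.mul_le_mul_right _ hEcard)
    have e2 : R.card * l ≤ d * ((1 + d * (2 * r)) * S.card) := by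
      refine hcount.trans (Nat.mul_le_mul_left _ ?_)
      nlinarith
    have e3 : R.card * l ≤ R.card * (d * (1 + d * (2 * r)) * (2 * d + 1)) := by
      refine e2.trans ?_
      calc _ ≤ d * ((1 + d * (2 * r)) * ((2 * d + 1) * R.card)) := by gcongr
        _ = _ := by ring
    have e4 := Nat.le_of_mul_le_mul_left e3 hR
    have e5 : d ≤ d ^ 2 := by nlinarith
    have e6 : d ^ 2 ≤ d ^ 3 := by nlinarith [sq_nonneg d]
    have e7 : r * d ^ 2 ≤ r * d ^ 3 := Nat.mul_le_mul_left _ e6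
    rw [hl] at e4
    nlinarith
  · intro e he
    exact Finset.mem_union_left _ (hRS (Finset.mem_product.1 he).1)
  · intro e he
    exact (s1 e.1 (hRS (Finset.mem_product.1 he).1) e.2).1
  · intro e he
    exact (s1 e.1 (hRS (Finset.mem_product.1 he).1) e.2).2.symm
  · rintro ⟨v, i⟩ he ⟨v', i'⟩ he' h
    have hv := (Finset.mem_product.1 he).1
    have hv' := (Finset.mem_product.1 he').1
    dsimp only at h hv hv'
    rcases Sym2.eq_iff.1 h with ⟨h1, h2⟩ | ⟨h1, h2⟩
    · subst h1
      by_cases hii : i = i'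
      · rw [hii]
      · have hvS := hRS hv
        have := s4 v hvS i i' hii (m v i) (by simp) (by rw [h2]; simp)
        exact absurd this (s1 v hvS i).2
    · exfalso
      have hne : v ≠ v' := fun h => (s1 v (hRS hv) i).2 (h2.trans h.symm)
      have := hconn v (hRS hv) i
      rw [h2] at this
      exact hRadj v hv v' hv' hne _ (hJSM v (hRS hv) i) this
  · rintro ⟨v, i⟩ he
    exact hJSM v (hRS (Finset.mem_product.1 he).1) i
  · rintro ⟨v, i⟩ he ⟨v', i'⟩ he' hne w hw hw'
    have hv := (Finset.mem_product.1 he).1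
    have hv' := (Finset.mem_product.1 he').1
    dsimp only at hv hv'
    by_cases hvv : v = v'
    · subst hvv
      have hvS := hRS hv
      have a1 := (hJ v hvS i w).1 hw
      have a2 := (hJ v hvS i' w).1 hw'
      exact a1.2.1 (s4 v hvS i i' (fun h => hne (by rw [h])) w a1.1 a2.1)
    · obtain ⟨p, hp, hps⟩ := hconn2 v (hRS hv) i w hw
      obtain ⟨p', hp', hps'⟩ := (hconn2 v' (hRS hv') i' w hw').symm
      refine hRadj v hv v' hv' hvv (J (v, i) ∪ J (v', i')) ?_ ⟨p.append p', ?_, ?_⟩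
      · intro x hx
        rcases Finset.mem_union.1 hx with hx | hx
        · exact hJSM v (hRS hv) i x hx
        · exact hJSM v' (hRS hv') i' x hx
      · rw [SimpleGraph.Walk.length_append]; omega
      · intro x hx
        rw [SimpleGraph.Walk.mem_support_append_iff] at hx
        rw [Finset.mem_union]
        rcases hx with hx | hx
        · rcases hps x hx with rfl | rfl | h <;> tauto
        · rcases hps' x hx with rfl | rfl | h <;> tauto
  · rintro ⟨v, i⟩ he
    exact hconn v (hRS (Finset.mem_product.1 he).1) i

/-- If every depth-`(r−1)` topological minor of `G` has edge density at most `d`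
(`r, d ≥ 1`), then `G` has a vertex ordering `σ` with `adm_r(G,σ) ≤ 6rd³`. -/
theorem stmt4 {V : Type} [Fintype V] (G : SimpleGraph V) (r d : ℕ) (hr : 1 ≤ r) (hd : 1 ≤ d)
    (hminor : ¬ HasDepthTopMinorDensityGT G (r - 1) (d : ℝ)) :
    ∃ σ : V → ℕ, Function.Injective σ ∧ admOrd G σ r ≤ 6 * r * d ^ 3 := by
  obtain ⟨r, rfl⟩ : ∃ k, r = k + 1 := ⟨r - 1, by omega⟩
  rw [Nat.add_sub_cancel] at hminor
  obtain ⟨σ, h1, -, h3⟩ := exists_order G (r + 1) (6 * (r + 1) * d ^ 3 + 1)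
    (fun S hS => exists_small G r d hd hminor S hS) _ Finset.univ rfl
  refine ⟨σ, fun a b h => h1 (by simp) (by simp) h, Finset.sup_le fun v _ => ?_⟩
  refine csSup_le' fun m hm => ?_
  by_contra hlt
  apply h3 v (Finset.mem_univ v)
  simp only [Finset.mem_univ, true_and]
  exact BConnGE.mono hm (by omega)
end

section
/- Let c, r ∈ ℕ with c ≥ 2, let G be a finite simple graph, and let σ be a vertex ordering of G with adm_r(G,σ) ≤ c. Then wcol_r(G,σ) ≤ (c^{r+1} − 1)/(c − 1). -/
/-- `WReach G σ r v` is the set of vertices weakly `r`-reachable from `v` in the vertex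
ordering `σ`: those `u` with `σ u ≤ σ v` admitting a path of length at most `r` from `v`
to `u` all of whose internal vertices are larger than `u` in `σ`. -/
def WReach {V : Type} (G : SimpleGraph V) (σ : V → ℕ) (r : ℕ) (v : V) : Set V :=
  {u | σ u ≤ σ v ∧ ∃ p : G.Walk v u, p.IsPath ∧ p.length ≤ r ∧
        ∀ w ∈ p.support, w ≠ v → w ≠ u → σ u < σ w}

/-- The weak `r`-coloring number `wcol_r(G,σ)` of a vertex ordering `σ`:
the maximum over vertices `v` of `|WReach_r[G,σ,v]|`. -/
noncomputable def wcolOrd {V : Type} [Fintype V] (G : SimpleGraph V) (σ : V → ℕ) (r : ℕ) : ℕ :=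
  Finset.univ.sup fun v => (WReach G σ r v).ncard

namespace Stmt6

open List

theorem shortlex_append {α : Type} {R : α → α → Prop} {s t : List α} (h : Shortlex R s t)
    (b : List α) : Shortlex R (s ++ b) (t ++ b) := by
  rcases shortlex_def.mp h with h1 | ⟨h1, h2⟩
  · exact Shortlex.of_length_lt (by simpa using h1)
  · refine Shortlex.of_lex (by simpa using h1) ?_
    clear h
    induction h2 with
    | nil => simp at h1
    | cons h ih => exact List.Lex.cons (ih (by simpa using h1))
    | rel h => exact List.Lex.rel h

theorem count {V : Type} [DecidableEq V] (c r : ℕ) : ∀ (L : Finset (List V)),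
    (∀ l ∈ L, l.length ≤ r) →
    (∀ (p : List V) (Z : Finset V), (∀ z ∈ Z, ∃ b, p ++ z :: b ∈ L) → Z.card ≤ c) →
    L.card ≤ ∑ i ∈ Finset.range (r + 1), c ^ i := by
  induction r with
  | zero =>
    intro L h1 _
    have : L ⊆ {[]} := by
      intro l hl
      have := h1 l hl
      simpa using this
    simpa using Finset.card_le_card this
  | succ r ih =>
    intro L h1 h2
    let T : V → Finset (List V) := fun z => (L.filter (fun l => l.head? = some z)).image List.tail
    have hT : ∀ z l, l ∈ T z ↔ z :: l ∈ L := by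
      intro z l
      simp only [T, Finset.mem_image, Finset.mem_filter]
      constructor
      · rintro ⟨a, ⟨ha, hh⟩, rfl⟩
        cases a with
        | nil => simp at hh
        | cons y a => simp at hh; subst hh; simpa using ha
      · intro h
        exact ⟨z :: l, ⟨h, rfl⟩, rfl⟩
    let Z : Finset V := L.biUnion (fun l => l.head?.toFinset)
    have hZ : ∀ z, z ∈ Z → ∃ b, z :: b ∈ L := by
      intro z hz
      simp only [Z, Finset.mem_biUnion, Option.mem_toFinset] at hz
      obtain ⟨l, hl, hz⟩ := hz
      cases l with
      | nil => simp at hz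
      | cons y a => simp at hz; subst hz; exact ⟨a, hl⟩
    have hZc : Z.card ≤ c := h2 [] Z (by simpa using hZ)
    have hsub : L ⊆ {[]} ∪ Z.biUnion (fun z => (T z).image (fun l => z :: l)) := by
      intro l hl
      cases l with
      | nil => simp
      | cons y a =>
        simp only [Finset.mem_union, Finset.mem_biUnion, Finset.mem_image]
        right
        refine ⟨y, ?_, a, (hT y a).2 hl, rfl⟩
        simp only [Z, Finset.mem_biUnion, Option.mem_toFinset]
        exact ⟨_, hl, by simp⟩
    have hTc : ∀ z, (T z).card ≤ ∑ i ∈ Finset.range (r + 1), c ^ i := by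
      intro z
      apply ih
      · intro l hl
        have := h1 _ ((hT z l).1 hl)
        simpa using this
      · intro p Z' hZ'
        apply h2 (z :: p) Z'
        intro y hy
        obtain ⟨b, hb⟩ := hZ' y hy
        exact ⟨b, by simpa using (hT z _).1 hb⟩
    calc L.card ≤ _ := Finset.card_le_card hsub
      _ ≤ 1 + (Z.biUnion (fun z => (T z).image (fun l => z :: l))).card := by
        refine (Finset.card_union_le _ _).trans ?_
        simp
      _ ≤ 1 + Z.card * ∑ i ∈ Finset.range (r + 1), c ^ i := by
        gcongr
        apply Finset.card_biUnion_le_card_mul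
        intro z _
        exact Finset.card_image_le.trans (hTc z)
      _ ≤ 1 + c * ∑ i ∈ Finset.range (r + 1), c ^ i := by gcongr
      _ = _ := by
        rw [Finset.sum_range_succ' _ (r + 1), Finset.mul_sum, add_comm]
        simp [pow_succ, mul_comm]

theorem split_first {V : Type} (σ : V → ℕ) (k : ℕ) (u : V) (hu : σ u < k) : ∀ l : List V, u ∈ l →
    ∃ m t b, l = m ++ t :: b ∧ (∀ y ∈ m, k ≤ σ y) ∧ σ t < k := by
  intro l
  induction l with
  | nil => simp
  | cons y l ih =>
    intro h
    by_cases hy : σ y < k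
    · exact ⟨[], y, l, by simp, by simp, hy⟩
    · have : u ∈ l := by
        rcases List.mem_cons.1 h with rfl | h
        · exact absurd hu hy
        · exact h
      obtain ⟨m, t, b, rfl, h1, h2⟩ := ih this
      refine ⟨y :: m, t, b, by simp, ?_, h2⟩
      intro x hx
      rcases List.mem_cons.1 hx with rfl | hx
      · omega
      · exact h1 x hx

theorem exists_walk {V : Type} (G : SimpleGraph V) (t : V) : ∀ (m : List V) (w : V),
    IsChain G.Adj (w :: (m ++ [t])) → ∃ p : G.Walk w t, p.support = w :: (m ++ [t]) := by
  intro m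
  induction m with
  | nil =>
    intro w h
    have : G.Adj w t := by simpa using h
    exact ⟨.cons this .nil, by simp⟩
  | cons y m ih =>
    intro w h
    simp only [List.cons_append, List.isChain_cons_cons] at h
    obtain ⟨p, hp⟩ := ih y h.2
    exact ⟨.cons h.1 p, by simp [hp]⟩

def Good {V : Type} (G : SimpleGraph V) (σ : V → ℕ) (v u : V) (l : List V) : Prop :=
  IsChain G.Adj l ∧ l.head? = some v ∧ l.getLast? = some u ∧ ∀ x ∈ l, σ u ≤ σ x

def MinGood {V : Type} (G : SimpleGraph V) (σ : V → ℕ) (v u : V) (l : List V) : Prop :=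
  Good G σ v u l ∧ ∀ l', Good G σ v u l' → ¬ Shortlex (fun x y => σ x < σ y) l' l

theorem Good.replace {V : Type} {G : SimpleGraph V} {σ : V → ℕ} {v u : V} {a : List V} {w : V}
    {s₁ s₂ : List V} {x : V} {d : List V} (h : Good G σ v u (a ++ w :: (s₁ ++ x :: d)))
    (hs : IsChain G.Adj (w :: (s₂ ++ [x]))) (hs' : ∀ y ∈ s₂, σ u ≤ σ y) :
    Good G σ v u (a ++ w :: (s₂ ++ x :: d)) := by
  obtain ⟨h1, h2, h3, h4⟩ := h
  refine ⟨?_, ?_, ?_, ?_⟩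
  · rw [isChain_split] at h1 ⊢
    refine ⟨h1.1, ?_⟩
    have h5 := h1.2
    rw [← List.cons_append, isChain_split] at h5 ⊢
    exact ⟨by simpa using hs, h5.2⟩
  · cases a <;> simpa using h2
  · simpa [List.getLast?_cons, List.getLast?_append] using h3
  · intro y hy
    simp only [List.mem_append, List.mem_cons] at hy h4
    rcases hy with hy | hy | hy | hy
    · exact h4 y (by tauto)
    · exact h4 y (by tauto)
    · exact hs' y hy
    · exact h4 y (by tauto)

theorem MinGood.nodup {V : Type} {G : SimpleGraph V} {σ : V → ℕ} {v u : V} {l : List V}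
    (h : MinGood G σ v u l) : l.Nodup := by
  by_contra hn
  rw [← List.exists_duplicate_iff_not_nodup] at hn
  obtain ⟨x, hx⟩ := hn
  have : ∃ a b d, l = a ++ x :: (b ++ x :: d) := by
    clear h
    induction hx with
    | cons_mem h =>
      obtain ⟨b, d, rfl⟩ := List.append_of_mem h
      exact ⟨[], b, d, rfl⟩
    | cons_duplicate h ih =>
      obtain ⟨a, b, d, rfl⟩ := ih
      exact ⟨_ :: a, b, d, rfl⟩
  obtain ⟨a, b, d, rfl⟩ := this
  obtain ⟨⟨h1, h2, h3, h4⟩, h5⟩ := h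
  refine h5 (a ++ x :: d) ⟨?_, ?_, ?_, ?_⟩ (Shortlex.of_length_lt (by simp))
  · rw [isChain_split] at h1 ⊢
    refine ⟨h1.1, ?_⟩
    have h5 := h1.2
    rw [← List.cons_append, isChain_split] at h5
    exact h5.2
  · cases a <;> simpa using h2
  · simpa [List.getLast?_cons, List.getLast?_append] using h3
  · intro y hy
    apply h4
    simp only [List.mem_append, List.mem_cons] at hy ⊢
    tauto

/-- Two minimal lists sharing the prefix up to `w` and meeting later coincide in between. -/
theorem MinGood.eq_seg {V : Type} {G : SimpleGraph V} {σ : V → ℕ} (hσ : Function.Injective σ)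
    {v u₁ u₂ : V} {a : List V} {w : V} {s₁ s₂ : List V} {x : V} {d₁ d₂ : List V}
    (h₁ : MinGood G σ v u₁ (a ++ w :: (s₁ ++ x :: d₁)))
    (h₂ : MinGood G σ v u₂ (a ++ w :: (s₂ ++ x :: d₂)))
    (hs₁ : ∀ y ∈ s₁, σ w ≤ σ y) (hs₂ : ∀ y ∈ s₂, σ w ≤ σ y) : s₁ = s₂ := by
  have key : ∀ {u₁ u₂ : V} {s₁ s₂ d₁ d₂ : List V}, 
      MinGood G σ v u₁ (a ++ w :: (s₁ ++ x :: d₁)) →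
      MinGood G σ v u₂ (a ++ w :: (s₂ ++ x :: d₂)) →
      (∀ y ∈ s₂, σ w ≤ σ y) → ¬ Shortlex (fun x y => σ x < σ y) s₂ s₁ := by
    intro u₁ u₂ s₁ s₂ d₁ d₂ h₁ h₂ hs₂ hlt
    refine h₁.2 (a ++ w :: (s₂ ++ x :: d₂.take 0 ++ d₁)) ?_ ?_
    · simp only [List.take_zero, List.append_assoc, List.cons_append, List.nil_append]
      refine h₁.1.replace ?_ ?_
      · have := h₂.1.1
        rw [isChain_split] at this
        have := this.2
        rw [← List.cons_append, isChain_split] at this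
        simpa using this.1
      · intro y hy
        exact (h₁.1.2.2.2 w (by simp)).trans (hs₂ y hy)
    · simp only [List.take_zero, List.append_assoc, List.cons_append, List.nil_append]
      have := (shortlex_append hlt (x :: d₁)).append_left (a ++ [w])
      simpa using this
  have : Std.Trichotomous (fun x y : V => σ x < σ y) :=
    ⟨fun x y h1 h2 => hσ (by omega)⟩
  exact (Shortlex.trichotomous (r := fun x y : V => σ x < σ y)).trichotomous _ _
    (key h₂ h₁ hs₁) (key h₁ h₂ hs₂)

theorem node {V : Type} {G : SimpleGraph V} {σ : V → ℕ} (hσ : Function.Injective σ)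
    {v : V} {c r : ℕ} (a : List V) (w : V)
    (hb : ∀ m, BConnGE G {y | σ y ≤ σ w} w r m → m ≤ c) (Z : Finset V)
    (hZ : ∀ z ∈ Z, ∃ u b, MinGood G σ v u (a ++ w :: z :: b) ∧
      (a ++ w :: z :: b).length ≤ r + 1) : Z.card ≤ c := by
  have H : ∀ z : Z, ∃ (u t : V) (m b : List V), MinGood G σ v u (a ++ w :: (m ++ t :: b)) ∧
      (a ++ w :: (m ++ t :: b)).length ≤ r + 1 ∧ (∀ y ∈ m, σ w < σ y) ∧ σ t < σ w ∧
      (m ++ t :: b).head? = some z.1 := by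
    rintro ⟨z, hz⟩
    obtain ⟨u, b, h1, h2⟩ := hZ z hz
    have hnd := h1.nodup
    have hnd' : (w :: z :: b).Nodup := (List.nodup_append.1 hnd).2.1
    have hu : u ∈ z :: b := by
      have := h1.1.2.2.1
      apply List.mem_of_getLast? 
      simpa using this
    have huw : u ≠ w := by
      rintro rfl
      exact (List.nodup_cons.1 hnd').1 hu
    have hlt : σ u < σ w := lt_of_le_of_ne (h1.1.2.2.2 w (by simp)) (fun h => huw (hσ h))
    obtain ⟨m, t, b', he, h3, h4⟩ := split_first σ (σ w) u hlt _ hu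
    have h5 : (z :: b).head? = some z := rfl
    rw [he] at h1 h2 h5 hnd'
    refine ⟨u, t, m, b', h1, h2, ?_, h4, h5⟩
    intro y hy
    refine lt_of_le_of_ne (h3 y hy) (fun h => ?_)
    have := hσ h
    subst this
    exact (List.nodup_cons.1 hnd').1 (by simp [hy])
  choose u t m b h1 h2 h3 h4 h5 using H
  have hch : ∀ z, IsChain G.Adj (w :: (m z ++ [t z])) := by
    intro z
    have := (h1 z).1.1
    rw [isChain_split] at this
    have := this.2
    rw [← List.cons_append, isChain_split] at this
    simpa using this.1
  choose P hP using fun z => exists_walk G (t z) (m z) w (hch z)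
  let e := Z.equivFin.symm
  apply hb
  refine ⟨fun i => t (e i), fun i => P (e i), ?_, ?_, ?_, ?_, ?_⟩
  · intro i
    rw [SimpleGraph.Walk.isPath_def, hP]
    refine (h1 (e i)).nodup.sublist ?_
    refine List.Sublist.trans ?_ (List.sublist_append_right _ _)
    simp
  · intro i
    have e1 := (P (e i)).length_support
    have e2 := h2 (e i)
    rw [hP] at e1
    simp at e1 e2
    simp only []
    omega
  · intro i
    exact ⟨(h4 (e i)).le, fun h => (h4 (e i)).ne (congrArg σ h)⟩
  · intro i x hx hxw hxt
    rw [hP] at hx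
    simp [hxw, hxt] at hx
    have := h3 _ x hx
    simpa using this
  · intro i j hij x hxi hxj
    by_contra hxw
    apply hij
    apply e.injective
    rw [hP] at hxi hxj
    have hs : ∀ z : Z, x ∈ w :: (m z ++ [t z]) → ∃ s d, m z ++ t z :: b z = s ++ x :: d ∧
        ∀ y ∈ s, σ w ≤ σ y := by
      intro z hz
      simp only [List.mem_cons, hxw, false_or, List.mem_append, List.not_mem_nil, or_false] at hz
      rcases hz with hz | rfl
      · obtain ⟨s, d, hsd⟩ := List.append_of_mem hz
        refine ⟨s, d ++ t z :: b z, by simp [hsd], ?_⟩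
        intro y hy
        exact (h3 z y (by simp [hsd, hy])).le
      · exact ⟨m z, b z, rfl, fun y hy => (h3 z y hy).le⟩
    obtain ⟨s₁, d₁, he₁, hs₁⟩ := hs _ hxi
    obtain ⟨s₂, d₂, he₂, hs₂⟩ := hs _ hxj
    have g1 := h1 (e i)
    have g2 := h1 (e j)
    have k1 := h5 (e i)
    have k2 := h5 (e j)
    rw [he₁] at g1 k1
    rw [he₂] at g2 k2
    have := MinGood.eq_seg hσ g1 g2 hs₁ hs₂
    subst this
    apply Subtype.ext
    cases s₁ <;> simp_all

theorem bconn_bound {V : Type} [Fintype V] (G : SimpleGraph V) (S : Set V) (u : V) (r m : ℕ)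
    (h : BConnGE G S u r m) : m ≤ bconn G S u r := by
  refine le_csSup (s := {m : ℕ | BConnGE G S u r m}) ?_ h
  refine ⟨Fintype.card V, ?_⟩
  rintro k ⟨t, P, -, -, ht, -, hd⟩
  have : Function.Injective t := by
    intro i j hij
    by_contra hne
    refine (ht i).2 (hd i j hne (t i) (P i).end_mem_support ?_)
    rw [hij]
    exact (P j).end_mem_support
  simpa using Fintype.card_le_of_injective t this

end Stmt6

open Stmt6 in
/-- For any `c ≥ 2` and any vertex ordering `σ` of `G` with `adm_r(G,σ) ≤ c`,
one has `wcol_r(G,σ) ≤ (c^{r+1} − 1)/(c − 1)`. -/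
theorem stmt6 {V : Type} [Fintype V] (G : SimpleGraph V) (σ : V → ℕ)
    (hσ : Function.Injective σ) (c r : ℕ) (hc : 2 ≤ c) (hadm : admOrd G σ r ≤ c) :
    wcolOrd G σ r ≤ (c ^ (r + 1) - 1) / (c - 1) := by
  classical
  rw [← Nat.geomSum_eq hc]
  refine Finset.sup_le fun v _ => ?_
  have hb : ∀ w m, BConnGE G {y | σ y ≤ σ w} w r m → m ≤ c := by
    intro w m h
    refine (bconn_bound G _ w r m h).trans (le_trans ?_ hadm)
    exact Finset.le_sup (f := fun v => bconn G {u | σ u ≤ σ v} v r) (Finset.mem_univ w)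
  have hwf : WellFounded (List.Shortlex (fun x y : V => σ x < σ y)) :=
    List.Shortlex.wf (InvImage.wf σ wellFounded_lt)
  have hex : ∀ u : WReach G σ r v, ∃ l, MinGood G σ v u (v :: l) ∧ l.length ≤ r := by
    rintro ⟨u, hu, p, hp, hl, hw⟩
    have hg : Good G σ v u p.support := by
      refine ⟨p.isChain_adj_support, ?_, ?_, ?_⟩
      · rw [← p.cons_tail_support]; rfl
      · rw [List.getLast?_eq_some_getLast p.support_ne_nil, p.getLast_support]
      · intro x hx
        by_cases h1 : x = v
        · rw [h1]; exact hu
        by_cases h2 : x = u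
        · rw [h2]
        exact (hw x hx h1 h2).le
    obtain ⟨l, hl1, hl2⟩ := hwf.has_min {l | Good G σ v u l} ⟨_, hg⟩
    have hh := hl1.2.1
    cases l with
    | nil => simp at hh
    | cons y l =>
      simp at hh
      subst hh
      refine ⟨l, ⟨hl1, fun l' h' => hl2 l' h'⟩, ?_⟩
      by_contra hlt
      refine hl2 _ hg (List.Shortlex.of_length_lt ?_)
      rw [p.length_support]
      simp
      omega
  choose f hf1 hf2 using hex
  have hinj : Function.Injective f := by
    intro x y hxy
    have h1 := (hf1 x).1.2.2.1
    have h2 := (hf1 y).1.2.2.1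
    rw [hxy, h2] at h1
    exact Subtype.ext (Option.some.inj h1).symm
  have hcard : (WReach G σ r v).ncard = (Finset.univ.image f).card := by
    rw [Finset.card_image_of_injective _ hinj, Finset.card_univ, ← Nat.card_eq_fintype_card]
    rfl
  rw [hcard]
  apply count
  · intro l hl
    simp only [Finset.mem_image, Finset.mem_univ, true_and] at hl
    obtain ⟨x, rfl⟩ := hl
    exact hf2 x
  · intro p Z hZ
    obtain ⟨a, w, haw⟩ : ∃ a w, v :: p = a ++ [w] :=
      ⟨_, _, (List.dropLast_append_getLast (List.cons_ne_nil v p)).symm⟩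
    refine node (v := v) hσ a w (hb w) Z ?_
    intro z hz
    obtain ⟨b, hb'⟩ := hZ z hz
    simp only [Finset.mem_image, Finset.mem_univ, true_and] at hb'
    obtain ⟨x, hx⟩ := hb'
    have he : a ++ w :: z :: b = v :: f x := by
      rw [hx, ← List.cons_append, haw]
      simp
    refine ⟨x, b, ?_, ?_⟩
    · rw [he]; exact hf1 x
    · rw [he]; simpa using hf2 x
end

section
/- Let r ≥ 1 and d ≥ 1 be integers and let G be a finite simple graph such that every depth-(r−1) topological minor of G has edge density at most d. Then wcol_r(G) ≤ ((6r²d³)^{r+1} − 1)/(6r²d³ − 1), i.e., G has a vertex ordering σ with wcol_r(G,σ) ≤ ((6r²d³)^{r+1} − 1)/(6r²d³ − 1). -/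
/-- `a` and `b` are linked by a walk of length at most `n` with interior inside `I`. -/
def Lk {V : Type} (G : SimpleGraph V) (n : ℕ) (a b : V) (I : Finset V) : Prop :=
  ∃ p : G.Walk a b, p.length ≤ n ∧ ∀ w ∈ p.support, w = a ∨ w = b ∨ w ∈ I

open Classical in
theorem density_bound_s7 {V ι : Type} (G : SimpleGraph V) (k d : ℕ)
    (hminor : ¬ HasDepthTopMinorDensityGT G k (d : ℝ))
    (T : Finset V) (E : Finset ι) (src tgt : ι → V) (I : ι → Finset V)
    (hs : ∀ e ∈ E, src e ∈ T) (ht : ∀ e ∈ E, tgt e ∈ T) (hne : ∀ e ∈ E, src e ≠ tgt e)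
    (hinj : ∀ e ∈ E, ∀ e' ∈ E, src e = src e' → tgt e = tgt e' → e = e')
    (hswap : ∀ e ∈ E, ∀ e' ∈ E, ¬ (src e = tgt e' ∧ tgt e = src e'))
    (hIT : ∀ e ∈ E, ∀ w ∈ I e, w ∉ T)
    (hlk : ∀ e ∈ E, Lk G (2 * k + 1) (src e) (tgt e) (I e))
    (hdis : ∀ e ∈ E, ∀ e' ∈ E, e ≠ e' → ∀ w ∈ I e, w ∉ I e') :
    E.card ≤ d * T.card := by
  by_contra hcon
  push Not at hcon
  apply hminor
  have hTpos : 0 < T.card := by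
    have : 0 < E.card := by omega
    obtain ⟨e, he⟩ := Finset.card_pos.mp this
    exact Finset.card_pos.mpr ⟨_, hs e he⟩
  let φ := T.equivFin
  let f : Fin T.card → V := fun i => (φ.symm i : V)
  have hfT : ∀ i, f i ∈ T := fun i => (φ.symm i).2
  have hfinj : Function.Injective f := fun i j h => φ.symm.injective (Subtype.ext h)
  have hfsurj : ∀ x ∈ T, ∃ i, f i = x := fun x hx => ⟨φ ⟨x, hx⟩, by simp [f]⟩
  let Q : Fin T.card → Fin T.card → ι → Prop := fun a b e =>
    e ∈ E ∧ ((src e = f a ∧ tgt e = f b) ∨ (src e = f b ∧ tgt e = f a))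
  have hQs : ∀ a b e, Q a b e → Q b a e := fun a b e h => ⟨h.1, h.2.symm⟩
  let H : SimpleGraph (Fin T.card) :=
    { Adj := fun a b => ∃ e, Q a b e
      symm := ⟨fun a b ⟨e, h⟩ => ⟨e, hQs a b e h⟩⟩
      loopless := ⟨fun a ⟨e, h⟩ => by
        rcases h.2 with h' | h' <;> exact hne e h.1 (h'.1.trans h'.2.symm)⟩ }
  have hP : ∀ (a b : Fin T.card), H.Adj a b → ∃ (e : ι) (p : G.Walk (f a) (f b)), Q a b e ∧
      p.IsPath ∧ p.length ≤ 2 * k + 1 ∧ ∀ w ∈ p.support, w = f a ∨ w = f b ∨ w ∈ I e := by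
    rintro a b ⟨e, h⟩
    have key : ∃ p : G.Walk (f a) (f b), p.length ≤ 2 * k + 1 ∧
        ∀ w ∈ p.support, w = f a ∨ w = f b ∨ w ∈ I e := by
      obtain ⟨p, hp1, hp2⟩ := hlk e h.1
      rcases h.2 with h' | h'
      · rw [← h'.1, ← h'.2]; exact ⟨p, hp1, hp2⟩
      · rw [← h'.1, ← h'.2]
        refine ⟨p.reverse, by simpa using hp1, fun w hw => ?_⟩
        have := hp2 w (by simpa using hw)
        tauto
    obtain ⟨p, hp1, hp2⟩ := key
    exact ⟨e, p.bypass, h, p.bypass_isPath, p.length_bypass_le_length.trans hp1,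
      fun w hw => hp2 w (p.support_bypass_subset hw)⟩
  choose ee P hPQ hPp hPl hPs using hP
  refine ⟨T.card, H, hTpos, ?_, f, fun a b _ h => P a b h, hfinj, fun a b _ h => hPp a b h,
    fun a b _ h => hPl a b h, ?_, ?_⟩
  · have hcard : E.card ≤ H.edgeSet.ncard := by
      have hex : ∀ e ∈ E, ∃ ab : Fin T.card × Fin T.card, f ab.1 = src e ∧ f ab.2 = tgt e := by
        intro e he
        obtain ⟨i, hi⟩ := hfsurj _ (hs e he)
        obtain ⟨j, hj⟩ := hfsurj _ (ht e he)
        exact ⟨(i, j), hi, hj⟩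
      haveI : Nonempty (Fin T.card × Fin T.card) := ⟨⟨0, hTpos⟩, ⟨0, hTpos⟩⟩
      choose! g hg using hex
      rw [← Set.ncard_coe_finset E]
      refine Set.ncard_le_ncard_of_injOn (fun e => s((g e).1, (g e).2)) ?_ ?_ (Set.toFinite _)
      · intro e he
        have he' : e ∈ E := he
        rw [SimpleGraph.mem_edgeSet]
        exact ⟨e, he', Or.inl ⟨(hg e he').1.symm, (hg e he').2.symm⟩⟩
      · intro e he e' he' h
        have he1 : e ∈ E := he
        have he2 : e' ∈ E := he'
        obtain ⟨a1, a2⟩ := hg e he1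
        obtain ⟨b1, b2⟩ := hg e' he2
        simp only [Sym2.eq_iff] at h
        rcases h with ⟨h1, h2⟩ | ⟨h1, h2⟩
        · exact hinj e he1 e' he2 (by rw [← a1, ← b1, h1]) (by rw [← a2, ← b2, h2])
        · exact absurd ⟨by rw [← a1, ← b2, h1], by rw [← a2, ← b1, h2]⟩ (hswap e he1 e' he2)
    rw [lt_div_iff₀ (by exact_mod_cast hTpos)]
    exact_mod_cast lt_of_lt_of_le hcon hcard
  · intro a b _ h w hw h1 h2 c hc
    rcases hPs a b h w hw with h' | h' | h'
    · exact h1 h'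
    · exact h2 h'
    · exact hIT _ (hPQ a b h).1 w h' (hc ▸ hfT c)
  · intro a b hab h a' b' hab' h' hneq w hw hw'
    rcases hPs a b h w hw with h1 | h1 | h1
    · exact Or.inl h1
    · exact Or.inr h1
    exfalso
    have hwT := hIT _ (hPQ a b h).1 w h1
    rcases hPs a' b' h' w hw' with h2 | h2 | h2
    · exact hwT (h2 ▸ hfT a')
    · exact hwT (h2 ▸ hfT b')
    have hee : ee a b h = ee a' b' h' := by
      by_contra hx
      exact hdis _ (hPQ a b h).1 _ (hPQ a' b' h').1 hx w h1 h2
    have q1 := (hPQ a b h).2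
    have q2 := (hPQ a' b' h').2
    rw [← hee] at q2
    apply hneq
    rcases q1 with ⟨x1, x2⟩ | ⟨x1, x2⟩ <;> rcases q2 with ⟨y1, y2⟩ | ⟨y1, y2⟩ <;>
      have z1 := hfinj (x1.symm.trans y1) <;> have z2 := hfinj (x2.symm.trans y2) <;>
      subst z1 <;> subst z2
    · rfl
    · exact absurd hab (lt_asymm hab')
    · exact absurd hab (lt_asymm hab')
    · rfl

open Classical in
theorem indep_exists {V : Type} (E : Finset (V × V)) (d : ℕ)
    (hne : ∀ e ∈ E, e.1 ≠ e.2) (S : Finset V)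
    (hE : ∀ T ⊆ S, (E.filter (fun e => e.1 ∈ T ∧ e.2 ∈ T)).card ≤ d * T.card) :
    ∃ R ⊆ S, (∀ u ∈ R, ∀ v ∈ R, (u, v) ∉ E) ∧ S.card ≤ (2 * d + 1) * R.card := by
  induction S using Finset.strongInduction with
  | H S ih =>
  rcases S.eq_empty_or_nonempty with rfl | hS
  · exact ⟨∅, by simp⟩
  set ES := E.filter (fun e => e.1 ∈ S ∧ e.2 ∈ S) with hES
  have hcE : ES.card ≤ d * S.card := hE S subset_rfl
  have h1 : ES.card = ∑ v ∈ S, (ES.filter (fun e => e.1 = v)).card :=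
    Finset.card_eq_sum_card_fiberwise (fun e he => by
      have : e ∈ ES := he
      exact ((Finset.mem_filter.mp this).2).1)
  have h2 : ES.card = ∑ v ∈ S, (ES.filter (fun e => e.2 = v)).card :=
    Finset.card_eq_sum_card_fiberwise (fun e he => by
      have : e ∈ ES := he
      exact ((Finset.mem_filter.mp this).2).2)
  have hv : ∃ v ∈ S, (ES.filter (fun e => e.1 = v)).card + (ES.filter (fun e => e.2 = v)).card
      ≤ 2 * d := by
    apply Finset.exists_le_of_sum_le hS
    rw [Finset.sum_add_distrib, ← h1, ← h2, Finset.sum_const, smul_eq_mul]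
    nlinarith
  obtain ⟨v, hvS, hvd⟩ := hv
  let N : Finset V := insert v ((ES.filter (fun e => e.1 = v)).image Prod.snd ∪
    (ES.filter (fun e => e.2 = v)).image Prod.fst)
  have hN : N.card ≤ 2 * d + 1 := by
    refine (Finset.card_insert_le _ _).trans ?_
    have := Finset.card_union_le ((ES.filter (fun e => e.1 = v)).image Prod.snd)
      ((ES.filter (fun e => e.2 = v)).image Prod.fst)
    have a1 : ((ES.filter (fun e => e.1 = v)).image Prod.snd).card ≤ _ := Finset.card_image_le
    have a2 : ((ES.filter (fun e => e.2 = v)).image Prod.fst).card ≤ _ := Finset.card_image_le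
    omega
  have hsub : S \ N ⊂ S := by
    refine Finset.ssubset_iff_subset_ne.mpr ⟨Finset.sdiff_subset, fun h => ?_⟩
    rw [← h] at hvS
    exact (Finset.mem_sdiff.mp hvS).2 (Finset.mem_insert_self _ _)
  obtain ⟨R, hRS, hRi, hRc⟩ := ih (S \ N) hsub (fun T hT => hE T (hT.trans Finset.sdiff_subset))
  have hvR : v ∉ R := fun h => (Finset.mem_sdiff.mp (hRS h)).2 (Finset.mem_insert_self _ _)
  refine ⟨insert v R, ?_, ?_, ?_⟩
  · intro x hx
    rcases Finset.mem_insert.mp hx with rfl | hx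
    · exact hvS
    · exact (Finset.mem_sdiff.mp (hRS hx)).1
  · intro x hx y hy hxy
    rcases Finset.mem_insert.mp hx with rfl | hx' <;> rcases Finset.mem_insert.mp hy with rfl | hy'
    · exact hne _ hxy rfl
    · have := Finset.mem_sdiff.mp (hRS hy')
      apply this.2
      refine Finset.mem_insert_of_mem (Finset.mem_union_left _ (Finset.mem_image.mpr ⟨(x, y), ?_, rfl⟩))
      simp [hES, hxy, hvS, this.1]
    · have := Finset.mem_sdiff.mp (hRS hx')
      apply this.2
      refine Finset.mem_insert_of_mem (Finset.mem_union_right _ (Finset.mem_image.mpr ⟨(x, y), ?_, rfl⟩))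
      simp [hES, hxy, hvS, this.1]
    · exact hRi x hx' y hy' hxy
  · rw [Finset.card_insert_of_notMem hvR]
    have := Finset.card_le_card_sdiff_add_card (s := S) (t := N)
    nlinarith

theorem truncate {V : Type} (G : SimpleGraph V) (B : V → Prop) {a b : V} (p : G.Walk a b)
    (hb : B b) : ∃ c, B c ∧ ∃ q : G.Walk a c, q.length ≤ p.length ∧
      (∀ w ∈ q.support, w ∈ p.support) ∧ (∀ w ∈ q.support, B w → w = c) ∧
      (∀ x ∈ q.support, x ≠ c → ∃ q' : G.Walk a x, q'.length + 1 ≤ p.length ∧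
        ∀ w ∈ q'.support, ¬ B w ∧ w ∈ q.support) := by
  induction p with
  | nil => exact ⟨_, hb, .nil, by simp⟩
  | @cons u v w h p ih =>
    by_cases hu : B u
    · exact ⟨u, hu, .nil, by simp⟩
    · obtain ⟨c, hc, q, h1, h2, h3, h4⟩ := ih hb
      refine ⟨c, hc, .cons h q, by simpa using h1, ?_, ?_, ?_⟩
      · intro x hx
        simp only [SimpleGraph.Walk.support_cons, List.mem_cons] at hx ⊢
        exact hx.imp id (h2 x)
      · intro x hx hB
        simp only [SimpleGraph.Walk.support_cons, List.mem_cons] at hx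
        rcases hx with rfl | hx
        · exact absurd hB hu
        · exact h3 x hx hB
      · intro x hx hxc
        simp only [SimpleGraph.Walk.support_cons, List.mem_cons] at hx
        rcases hx with rfl | hx
        · exact ⟨.nil, by simp, by simp [hu]⟩
        · obtain ⟨q', h5, h6⟩ := h4 x hx hxc
          refine ⟨.cons h q', by simpa using h5, ?_⟩
          intro y hy
          simp only [SimpleGraph.Walk.support_cons, List.mem_cons] at hy ⊢
          rcases hy with rfl | hy
          · exact ⟨hu, Or.inl rfl⟩
          · exact ⟨(h6 y hy).1, Or.inr (h6 y hy).2⟩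

/-- A fan of walks from `u` to the vertices of `F ⊆ S`. -/
def Fan {V : Type} (G : SimpleGraph V) (r : ℕ) (S : Finset V) (u : V) (F : Finset V)
    (I : V → Finset V) : Prop :=
  F ⊆ S ∧ u ∉ F ∧ (∀ t ∈ F, (∀ w ∈ I t, w ∉ S) ∧ (I t).card ≤ r - 1 ∧ Lk G r u t (I t)) ∧
    ∀ t ∈ F, ∀ t' ∈ F, t ≠ t' → ∀ w ∈ I t, w ∉ I t'

/-- A family of internally disjoint walks of length at most `n` between pairs of `S`. -/
def PFam {V : Type} (G : SimpleGraph V) (n : ℕ) (S : Finset V) (E : Finset (V × V))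
    (J : V × V → Finset V) : Prop :=
  (∀ e ∈ E, e.1 ∈ S ∧ e.2 ∈ S ∧ e.1 ≠ e.2 ∧ (e.2, e.1) ∉ E ∧ (∀ w ∈ J e, w ∉ S) ∧
    (J e).card ≤ n ∧ Lk G n e.1 e.2 (J e)) ∧
  ∀ e ∈ E, ∀ e' ∈ E, e ≠ e' → ∀ w ∈ J e, w ∉ J e'

open Classical in
theorem pfam_augment {V : Type} (G : SimpleGraph V) (n : ℕ) (S : Finset V) (E : Finset (V × V))
    (J : V × V → Finset V) (h : PFam G n S E J) (u v : V) (hu : u ∈ S) (hv : v ∈ S) (huv : u ≠ v)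
    (h1 : (u, v) ∉ E) (h2 : (v, u) ∉ E) (p : G.Walk u v) (hp : p.length ≤ n)
    (hps : ∀ w ∈ p.support, w = u ∨ w = v ∨ w ∉ E.biUnion J ∪ S) :
    ∃ J', PFam G n S (insert (u, v) E) J' := by
  set K : Finset V := (p.support.toFinset.erase u).erase v with hK
  have hKc : K.card ≤ n := by
    refine (Finset.card_erase_le).trans ?_
    rw [Finset.card_erase_of_mem (by simp)]
    have := p.support.toFinset_card_le
    rw [SimpleGraph.Walk.length_support] at this
    omega
  have hKB : ∀ w ∈ K, w ∉ E.biUnion J ∪ S := by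
    intro w hw
    simp only [hK, Finset.mem_erase, List.mem_toFinset] at hw
    have := hps w hw.2.2
    tauto
  have hKS : ∀ w ∈ K, w ∉ S := fun w hw hS => hKB w hw (Finset.mem_union_right _ hS)
  have hKJ : ∀ w ∈ K, ∀ e ∈ E, w ∉ J e := fun w hw e he hJ =>
    hKB w hw (Finset.mem_union_left _ (Finset.mem_biUnion.mpr ⟨e, he, hJ⟩))
  have hJe : ∀ e ∈ E, Function.update J (u, v) K e = J e := fun e he =>
    Function.update_of_ne (fun h => h1 (by rw [← h]; exact he)) _ _
  refine ⟨Function.update J (u, v) K, ?_, ?_⟩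
  · intro e he
    rcases Finset.mem_insert.mp he with rfl | he
    · rw [Function.update_self]
      refine ⟨hu, hv, huv, ?_, hKS, hKc, p, hp, ?_⟩
      · simp only [Finset.mem_insert, Prod.mk.injEq, not_or]
        exact ⟨fun h => huv h.2, h2⟩
      · intro w hw
        simp only [hK, Finset.mem_erase, List.mem_toFinset]
        tauto
    · rw [hJe e he]
      obtain ⟨a1, a2, a3, a4, a5⟩ := h.1 e he
      refine ⟨a1, a2, a3, ?_, a5⟩
      simp only [Finset.mem_insert, Prod.mk.injEq, not_or]
      refine ⟨fun hh => h2 ?_, a4⟩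
      rw [← hh.1, ← hh.2]; exact he
  · intro e he e' he' hee w hw
    rcases Finset.mem_insert.mp he with rfl | he <;> rcases Finset.mem_insert.mp he' with rfl | he'
    · exact absurd rfl hee
    · rw [Function.update_self] at hw
      rw [hJe e' he']; exact hKJ w hw e' he'
    · rw [hJe e he] at hw
      rw [Function.update_self]; exact fun h => hKJ w h e he hw
    · rw [hJe e he] at hw
      rw [hJe e' he']
      exact h.2 e he e' he' hee w hw

open Classical in
theorem exists_small_fan {V : Type} [Fintype V] (G : SimpleGraph V) (r d : ℕ) (hr : 1 ≤ r)
    (hd : 1 ≤ d) (hminor : ¬ HasDepthTopMinorDensityGT G (r - 1) (d : ℝ))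
    (S : Finset V) (hS : S.Nonempty) :
    ∃ u ∈ S, ∀ F I, Fan G r S u F I → F.card ≤ 6 * r * d ^ 3 := by
  by_contra hcon
  push Not at hcon
  choose! F I hF hFc using hcon
  set n := 2 * (r - 1) + 1 with hn
  -- maximal family
  obtain ⟨E, hE, hEmax⟩ := Finset.exists_max_image
    (Finset.univ.filter (fun E : Finset (V × V) => ∃ J, PFam G n S E J)) Finset.card
    ⟨∅, by simp [PFam]⟩
  simp only [Finset.mem_filter, Finset.mem_univ, true_and] at hE hEmax
  obtain ⟨J, hJ⟩ := hE
  have haug : ∀ u v, u ∈ S → v ∈ S → u ≠ v → (u, v) ∉ E → (v, u) ∉ E → ∀ p : G.Walk u v,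
      p.length ≤ n → ¬ (∀ w ∈ p.support, w = u ∨ w = v ∨ w ∉ E.biUnion J ∪ S) := by
    intro u v hu hv huv h1 h2 p hp hps
    have := hEmax _ (pfam_augment G n S E J hJ u v hu hv huv h1 h2 p hp hps)
    rw [Finset.card_insert_of_notMem h1] at this
    omega
  set B := E.biUnion J ∪ S with hB
  have hSB : S ⊆ B := Finset.subset_union_right
  have hEd : ∀ T ⊆ S, (E.filter (fun e => e.1 ∈ T ∧ e.2 ∈ T)).card ≤ d * T.card := by
    intro T hT
    refine density_bound_s7 G (r - 1) d hminor T _ Prod.fst Prod.snd J ?_ ?_ ?_ ?_ ?_ ?_ ?_ ?_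
    · intro e he; exact (Finset.mem_filter.mp he).2.1
    · intro e he; exact (Finset.mem_filter.mp he).2.2
    · intro e he; exact (hJ.1 e (Finset.mem_filter.mp he).1).2.2.1
    · intro e _ e' _ h1 h2; exact Prod.ext h1 h2
    · rintro e he e' he' ⟨h1, h2⟩
      apply (hJ.1 e (Finset.mem_filter.mp he).1).2.2.2.1
      rw [h1, h2]; exact (Finset.mem_filter.mp he').1
    · intro e he w hw hwT
      exact (hJ.1 e (Finset.mem_filter.mp he).1).2.2.2.2.1 w hw (hT hwT)
    · intro e he; exact (hJ.1 e (Finset.mem_filter.mp he).1).2.2.2.2.2.2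
    · intro e he e' he' hee
      exact hJ.2 e (Finset.mem_filter.mp he).1 e' (Finset.mem_filter.mp he').1 hee
  have hEc : E.card ≤ d * S.card := by
    have := hEd S subset_rfl
    rwa [Finset.filter_true_of_mem (fun e he => ⟨(hJ.1 e he).1, (hJ.1 e he).2.1⟩)] at this
  obtain ⟨R, hRS, hRi, hRc⟩ := indep_exists E d (fun e he => (hJ.1 e he).2.2.1) S hEd
  have hBc : B.card ≤ 2 * r * d * S.card := by
    have h1 : B.card ≤ (E.biUnion J).card + S.card := Finset.card_union_le _ _
    have h2 : (E.biUnion J).card ≤ E.card * n :=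
      Finset.card_biUnion_le_card_mul _ _ _ (fun e he => (hJ.1 e he).2.2.2.2.2.1)
    have h3 : E.card * n ≤ d * S.card * n := Nat.mul_le_mul_right _ hEc
    have h4 : n + 1 = 2 * r := by omega
    rw [← h4]
    have h5 : S.card ≤ d * S.card := Nat.le_mul_of_pos_left _ hd
    nlinarith
  -- truncated fans
  have htr : ∀ v ∈ R, ∀ t ∈ F v, ∃ b ∈ B, b ≠ v ∧ (b = t ∨ b ∈ I v t) ∧ ∃ q : G.Walk v b,
      q.length ≤ r ∧ (∀ w ∈ q.support, w = v ∨ w = t ∨ w ∈ I v t) ∧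
      (∀ w ∈ q.support, w ∈ B → w = v ∨ w = b) ∧
      (∀ x ∈ q.support, x ≠ b → ∃ q' : G.Walk v x, q'.length + 1 ≤ r ∧
        ∀ w ∈ q'.support, w ∉ B ∨ w = v) := by
    intro v hv t ht
    have hfan := hF v (hRS hv)
    obtain ⟨_, _, p, hp, hps⟩ := hfan.2.2.1 t ht
    have htv : t ≠ v := fun h => hfan.2.1 (h ▸ ht)
    obtain ⟨c, hc, q, q1, q2, q3, q4⟩ := truncate G (fun w => w ∈ B ∧ w ≠ v) p
      ⟨hSB (hfan.1 ht), htv⟩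
    refine ⟨c, hc.1, hc.2, ?_, q, q1.trans hp, fun w hw => hps w (q2 w hw), ?_, ?_⟩
    · have := hps c (q2 c q.end_mem_support)
      have := hc.2
      tauto
    · intro w hw hwB
      by_cases h : w = v
      · exact Or.inl h
      · exact Or.inr (q3 w hw ⟨hwB, h⟩)
    · intro x hx hxc
      obtain ⟨q', h1, h2⟩ := q4 x hx hxc
      refine ⟨q', h1.trans hp, fun w hw => ?_⟩
      have := (h2 w hw).1
      tauto
  choose! b hbB hbv hbI q hql hqI hqB hqx using htr
  let K : V → V → Finset V := fun v t => if h : v ∈ R ∧ t ∈ F v then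
    (q v h.1 t h.2).support.toFinset.filter (fun w => w ∉ B) else ∅
  have hK : ∀ v t (hv : v ∈ R) (ht : t ∈ F v) w,
      w ∈ K v t ↔ w ∈ (q v hv t ht).support ∧ w ∉ B := by
    intro v t hv ht w
    simp [K, hv, ht]
  have hKI : ∀ v ∈ R, ∀ t ∈ F v, ∀ w ∈ K v t, w ∈ I v t := by
    intro v hv t ht w hw
    rw [hK v t hv ht] at hw
    rcases hqI v hv t ht w hw.1 with h | h | h
    · exact absurd (hSB (hRS hv)) (h ▸ hw.2)
    · exact absurd (hSB ((hF v (hRS hv)).1 ht)) (h ▸ hw.2)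
    · exact h
  have hbR : ∀ v ∈ R, ∀ t ∈ F v, b v t ∉ R := by
    intro v hv t ht hb
    refine haug v (b v t) (hRS hv) (hRS hb) (hbv v hv t ht).symm (hRi _ hv _ hb) (hRi _ hb _ hv)
      (q v hv t ht) ((hql v hv t ht).trans (by omega)) ?_
    intro w hw
    have := hqB v hv t ht w hw
    tauto
  have hmain : (R.sigma F).card ≤ d * B.card := by
    refine density_bound_s7 G (r - 1) d hminor B (R.sigma F) (fun e => e.1) (fun e => b e.1 e.2)
      (fun e => K e.1 e.2) ?_ ?_ ?_ ?_ ?_ ?_ ?_ ?_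
    · rintro ⟨v, t⟩ he
      exact hSB (hRS (Finset.mem_sigma.mp he).1)
    · rintro ⟨v, t⟩ he
      have := Finset.mem_sigma.mp he
      exact hbB v this.1 t this.2
    · rintro ⟨v, t⟩ he
      have := Finset.mem_sigma.mp he
      exact (hbv v this.1 t this.2).symm
    · rintro ⟨v, t⟩ he ⟨v', t'⟩ he' h1 h2
      obtain ⟨hv, ht⟩ := Finset.mem_sigma.mp he
      obtain ⟨hv', ht'⟩ := Finset.mem_sigma.mp he'
      simp only at h1 h2 hv ht hv' ht'
      subst h1
      congr 1
      by_contra htt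
      have hfan := hF v (hRS hv)
      have e1 := hbI v hv t ht
      have e2 := hbI v hv t' ht'
      rw [← h2] at e2
      rcases e1 with e1 | e1 <;> rcases e2 with e2 | e2
      · exact htt (e1.symm.trans e2)
      · exact (hfan.2.2.1 t' ht').1 _ e2 (by rw [e1]; exact hfan.1 ht)
      · exact (hfan.2.2.1 t ht).1 _ e1 (by rw [e2]; exact hfan.1 ht')
      · exact hfan.2.2.2 t ht t' ht' htt _ e1 e2
    · rintro ⟨v, t⟩ he ⟨v', t'⟩ he' ⟨h1, h2⟩
      obtain ⟨hv, ht⟩ := Finset.mem_sigma.mp he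
      obtain ⟨hv', ht'⟩ := Finset.mem_sigma.mp he'
      simp only at h1 h2 hv ht hv' ht'
      exact hbR v' hv' t' ht' (h1 ▸ hv)
    · rintro ⟨v, t⟩ he w hw
      obtain ⟨hv, ht⟩ := Finset.mem_sigma.mp he
      exact ((hK v t hv ht w).mp hw).2
    · rintro ⟨v, t⟩ he
      obtain ⟨hv, ht⟩ := Finset.mem_sigma.mp he
      refine ⟨q v hv t ht, (hql v hv t ht).trans (by omega), fun w hw => ?_⟩
      have h1 := hqB v hv t ht w hw
      have h2 := hK v t hv ht w
      simp only
      tauto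
    · rintro ⟨v, t⟩ he ⟨v', t'⟩ he' hee w hw hw'
      obtain ⟨hv, ht⟩ := Finset.mem_sigma.mp he
      obtain ⟨hv', ht'⟩ := Finset.mem_sigma.mp he'
      simp only at hv ht hv' ht' hw hw'
      by_cases hvv : v = v'
      · subst hvv
        have htt : t ≠ t' := fun h => hee (by rw [h])
        exact (hF v (hRS hv)).2.2.2 t ht t' ht' htt w (hKI v hv t ht w hw) (hKI v hv t' ht' w hw')
      · rw [hK v t hv ht] at hw
        rw [hK v' t' hv' ht'] at hw'
        obtain ⟨p1, l1, s1⟩ := hqx v hv t ht w hw.1 (fun h => hw.2 (h ▸ hbB v hv t ht))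
        obtain ⟨p2, l2, s2⟩ := hqx v' hv' t' ht' w hw'.1 (fun h => hw'.2 (h ▸ hbB v' hv' t' ht'))
        refine haug v v' (hRS hv) (hRS hv') hvv (hRi _ hv _ hv') (hRi _ hv' _ hv)
          (p1.append p2.reverse) ?_ ?_
        · rw [SimpleGraph.Walk.length_append, SimpleGraph.Walk.length_reverse]; omega
        · intro x hx
          rw [SimpleGraph.Walk.mem_support_append_iff, SimpleGraph.Walk.support_reverse,
            List.mem_reverse] at hx
          rcases hx with hx | hx
          · have := s1 x hx; tauto
          · have := s2 x hx; tauto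
  rw [Finset.card_sigma] at hmain
  have hlow : R.card * (6 * r * d ^ 3 + 1) ≤ ∑ v ∈ R, (F v).card := by
    rw [← smul_eq_mul]
    exact Finset.card_nsmul_le_sum _ _ _ (fun v hv => hFc v (hRS hv))
  have hRpos : 0 < R.card := by
    have := hS.card_pos
    by_contra h0
    have : R.card = 0 := by omega
    rw [this] at hRc; omega
  have h3 : S.card ≤ 3 * d * R.card := hRc.trans (Nat.mul_le_mul_right _ (by omega))
  have h4 : d * B.card ≤ 6 * r * d ^ 3 * R.card := by
    calc d * B.card ≤ d * (2 * r * d * (3 * d * R.card)) :=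
          Nat.mul_le_mul_left _ (hBc.trans (Nat.mul_le_mul_left _ h3))
      _ = _ := by ring
  nlinarith

open Classical in
theorem order_exists {V : Type} [Fintype V] (Q : Finset V → V → Prop)
    (hQ : ∀ S : Finset V, S.Nonempty → ∃ u ∈ S, Q S u) :
    ∃ σ : V → ℕ, Function.Injective σ ∧ ∀ u, Q (Finset.univ.filter (fun x => σ x ≤ σ u)) u := by
  have key : ∀ (n : ℕ) (S : Finset V), S.card = n → ∃ σ : V → ℕ, Set.InjOn σ S ∧
      (∀ x ∈ S, σ x < n) ∧ ∀ u ∈ S, Q (S.filter (fun x => σ x ≤ σ u)) u := by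
    intro n
    induction n with
    | zero =>
      intro S hS
      rw [Finset.card_eq_zero] at hS
      subst hS
      exact ⟨fun _ => 0, by simp⟩
    | succ n ih =>
      intro S hS
      obtain ⟨u, hu, hQu⟩ := hQ S (Finset.card_pos.mp (by omega))
      obtain ⟨σ, h1, h2, h3⟩ := ih (S.erase u) (by rw [Finset.card_erase_of_mem hu]; omega)
      have hne : ∀ x, x ≠ u → Function.update σ u n x = σ x := fun x hx =>
        Function.update_of_ne hx _ _
      have hlt : ∀ x ∈ S, x ≠ u → σ x < n := fun x hx hxu =>
        h2 x (Finset.mem_erase.mpr ⟨hxu, hx⟩)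
      refine ⟨Function.update σ u n, ?_, ?_, ?_⟩
      · intro x hx y hy hxy
        have hx : x ∈ S := hx
        have hy : y ∈ S := hy
        by_cases hxu : x = u <;> by_cases hyu : y = u
        · rw [hxu, hyu]
        · rw [hne y hyu, hxu, Function.update_self] at hxy
          have := hlt y hy hyu; omega
        · rw [hne x hxu, hyu, Function.update_self] at hxy
          have := hlt x hx hxu; omega
        · rw [hne x hxu, hne y hyu] at hxy
          exact h1 (Finset.mem_coe.mpr (Finset.mem_erase.mpr ⟨hxu, hx⟩))
            (Finset.mem_coe.mpr (Finset.mem_erase.mpr ⟨hyu, hy⟩)) hxy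
      · intro x hx
        by_cases hxu : x = u
        · rw [hxu, Function.update_self]; omega
        · rw [hne x hxu]; have := hlt x hx hxu; omega
      · intro x hx
        by_cases hxu : x = u
        · subst hxu
          rw [Finset.filter_true_of_mem]
          · exact hQu
          · intro y hy
            rw [Function.update_self]
            by_cases hyu : y = x
            · rw [hyu, Function.update_self]
            · rw [hne y hyu]; exact (hlt y hy hyu).le
        · convert h3 x (Finset.mem_erase.mpr ⟨hxu, hx⟩) using 1
          ext y
          simp only [Finset.mem_filter, Finset.mem_erase]
          rw [hne x hxu]
          by_cases hyu : y = u
          · have := hlt x hx hxu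
            rw [hyu, Function.update_self]
            simp; intro _; exact this
          · rw [hne y hyu]; tauto
  obtain ⟨σ, h1, _, h3⟩ := key _ Finset.univ rfl
  exact ⟨σ, fun x y h => h1 (by simp) (by simp) h, fun u => h3 u (Finset.mem_univ u)⟩

open Classical in
theorem exists_hitting {V : Type} [Fintype V] (G : SimpleGraph V) (r k : ℕ) (hr : 1 ≤ r)
    (σ : V → ℕ) (hσ : Function.Injective σ) (u : V)
    (hk : ∀ F I, Fan G r (Finset.univ.filter (fun x => σ x ≤ σ u)) u F I → F.card ≤ k) :
    ∃ N : Finset V, N.card ≤ r * k ∧ ∀ z (p : G.Walk u z), p.length ≤ r → σ z < σ u →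
      ∃ x ∈ N, x ≠ u ∧ x ∈ p.support := by
  set S := Finset.univ.filter (fun x => σ x ≤ σ u) with hS
  have hmS : ∀ x, x ∈ S ↔ σ x ≤ σ u := by simp [hS]
  obtain ⟨F, hF, hFmax⟩ := Finset.exists_max_image
    (Finset.univ.filter (fun F : Finset V => ∃ I, Fan G r S u F I)) Finset.card
    ⟨∅, by simp [Fan]⟩
  simp only [Finset.mem_filter, Finset.mem_univ, true_and] at hF hFmax
  obtain ⟨I, hI⟩ := hF
  have hFk := hk F I hI
  refine ⟨F ∪ F.biUnion I, ?_, ?_⟩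
  · have h1 := Finset.card_union_le F (F.biUnion I)
    have h2 : (F.biUnion I).card ≤ F.card * (r - 1) :=
      Finset.card_biUnion_le_card_mul _ _ _ (fun t ht => (hI.2.2.1 t ht).2.1)
    obtain ⟨s, rfl⟩ : ∃ s, r = s + 1 := ⟨r - 1, by omega⟩
    simp only [Nat.add_sub_cancel] at h2
    nlinarith
  · intro z p hp hz
    by_contra hcon
    push Not at hcon
    obtain ⟨c, hc, q, q1, q2, q3, -⟩ := truncate G (fun w => σ w < σ u) p hz
    have hcu : c ≠ u := fun h => by simp [h] at hc
    have hcF : c ∉ F := fun h =>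
      hcon c (Finset.mem_union_left _ h) hcu (q2 c q.end_mem_support)
    set K : Finset V := (q.support.toFinset.erase u).erase c with hK
    have hmK : ∀ w, w ∈ K ↔ w ≠ c ∧ w ≠ u ∧ w ∈ q.support := by simp [hK]
    have hKc : K.card ≤ r - 1 := by
      rw [hK, Finset.card_erase_of_mem (by simp [hcu]), Finset.card_erase_of_mem (by simp)]
      have := q.support.toFinset_card_le
      rw [SimpleGraph.Walk.length_support] at this
      omega
    have hKS : ∀ w ∈ K, w ∉ S := by
      intro w hw hwS
      rw [hmK] at hw
      rw [hmS] at hwS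
      rcases hwS.lt_or_eq with h | h
      · exact hw.1 (q3 w hw.2.2 h)
      · exact hw.2.1 (hσ h)
    have hKI : ∀ w ∈ K, ∀ t ∈ F, w ∉ I t := by
      intro w hw t ht hwt
      rw [hmK] at hw
      exact hcon w (Finset.mem_union_right _ (Finset.mem_biUnion.mpr ⟨t, ht, hwt⟩)) hw.2.1
        (q2 w hw.2.2)
    have hIe : ∀ t ∈ F, Function.update I c K t = I t := fun t ht =>
      Function.update_of_ne (fun h => hcF (by rw [← h]; exact ht)) _ _
    have hbig : Fan G r S u (insert c F) (Function.update I c K) := by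
      refine ⟨?_, ?_, ?_, ?_⟩
      · intro x hx
        rcases Finset.mem_insert.mp hx with rfl | hx
        · exact (hmS _).mpr hc.le
        · exact hI.1 hx
      · simp only [Finset.mem_insert, not_or]
        exact ⟨hcu.symm, hI.2.1⟩
      · intro t ht
        rcases Finset.mem_insert.mp ht with rfl | ht
        · rw [Function.update_self]
          refine ⟨hKS, hKc, q, q1.trans hp, fun w hw => ?_⟩
          rw [hmK]; tauto
        · rw [hIe t ht]; exact hI.2.2.1 t ht
      · intro t ht t' ht' htt w hw
        rcases Finset.mem_insert.mp ht with rfl | hs <;>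
          rcases Finset.mem_insert.mp ht' with rfl | hs'
        · exact absurd rfl htt
        · rw [Function.update_self] at hw
          rw [hIe t' hs']; exact hKI w hw t' hs'
        · rw [hIe t hs] at hw
          rw [Function.update_self]; exact fun h => hKI w h t hs hw
        · rw [hIe t hs] at hw
          rw [hIe t' hs']; exact hI.2.2.2 t hs t' hs' htt w hw
    have := hFmax _ ⟨_, hbig⟩
    rw [Finset.card_insert_of_notMem hcF] at this
    omega

open Classical in
theorem reach_count {V : Type} [Fintype V] (G : SimpleGraph V) (r K : ℕ)
    (σ : V → ℕ) (hσ : Function.Injective σ) (N : V → Finset V) (hNc : ∀ u, (N u).card ≤ K)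
    (hN : ∀ u z (p : G.Walk u z), p.length ≤ r → σ z < σ u → ∃ x ∈ N u, x ≠ u ∧ x ∈ p.support)
    (n : ℕ) (hn : n ≤ r) (v : V) :
    (Finset.univ.filter (fun u => ∃ p : G.Walk v u, p.length ≤ n ∧
      ∀ w ∈ p.support, σ u ≤ σ w)).card ≤ ∑ i ∈ Finset.range (n + 1), K ^ i := by
  induction n generalizing v with
  | zero =>
    have : (Finset.univ.filter (fun u => ∃ p : G.Walk v u, p.length ≤ 0 ∧
      ∀ w ∈ p.support, σ u ≤ σ w)) ⊆ {v} := by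
      intro u hu
      obtain ⟨p, hp, _⟩ := (Finset.mem_filter.mp hu).2
      rw [Finset.mem_singleton]
      exact (SimpleGraph.Walk.eq_of_length_eq_zero (by omega : p.length = 0)).symm
    simpa using Finset.card_le_card this
  | succ n ih =>
    have hsub : (Finset.univ.filter (fun u => ∃ p : G.Walk v u, p.length ≤ n + 1 ∧
      ∀ w ∈ p.support, σ u ≤ σ w)) ⊆ insert v ((N v).biUnion (fun x =>
        Finset.univ.filter (fun u => ∃ p : G.Walk x u, p.length ≤ n ∧
          ∀ w ∈ p.support, σ u ≤ σ w))) := by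
      intro u hu
      obtain ⟨p, hp, hps⟩ := (Finset.mem_filter.mp hu).2
      rw [Finset.mem_insert]
      by_cases huv : u = v
      · exact Or.inl huv
      · right
        have hlt : σ u < σ v := lt_of_le_of_ne (hps v p.start_mem_support) (fun h => huv (hσ h))
        obtain ⟨x, hx, hxv, hxp⟩ := hN v u p (by omega) hlt
        refine Finset.mem_biUnion.mpr ⟨x, hx, Finset.mem_filter.mpr ⟨Finset.mem_univ _,
          p.dropUntil x hxp, ?_, fun w hw => hps w (p.support_dropUntil_subset hxp hw)⟩⟩
        have h1 := congrArg SimpleGraph.Walk.length (p.take_spec hxp)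
        rw [SimpleGraph.Walk.length_append] at h1
        have h2 : (p.takeUntil x hxp).length ≠ 0 := fun h =>
          hxv (SimpleGraph.Walk.eq_of_length_eq_zero h).symm
        omega
    refine (Finset.card_le_card hsub).trans ((Finset.card_insert_le _ _).trans ?_)
    have h1 := Finset.card_biUnion_le_card_mul (N v) (fun x =>
        Finset.univ.filter (fun u => ∃ p : G.Walk x u, p.length ≤ n ∧
          ∀ w ∈ p.support, σ u ≤ σ w)) _ (fun x _ => ih (by omega) x)
    have h2 := Nat.mul_le_mul_right (∑ i ∈ Finset.range (n + 1), K ^ i) (hNc v)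
    rw [Finset.sum_range_succ', pow_zero, Finset.sum_congr rfl (fun i _ => pow_succ' K i),
      ← Finset.mul_sum]
    omega

/-- If every depth-`(r−1)` topological minor of `G` has edge density at most `d`
(`r, d ≥ 1`), then `G` has a vertex ordering `σ` with
`wcol_r(G,σ) ≤ ((6r²d³)^{r+1} − 1)/(6r²d³ − 1)`. -/
theorem stmt7 {V : Type} [Fintype V] (G : SimpleGraph V) (r d : ℕ) (hr : 1 ≤ r) (hd : 1 ≤ d)
    (hminor : ¬ HasDepthTopMinorDensityGT G (r - 1) (d : ℝ)) :
    ∃ σ : V → ℕ, Function.Injective σ ∧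
      wcolOrd G σ r ≤ ((6 * r ^ 2 * d ^ 3) ^ (r + 1) - 1) / (6 * r ^ 2 * d ^ 3 - 1) := by
  classical
  obtain ⟨σ, hσ, hQ⟩ := order_exists
    (fun S u => ∀ F I, Fan G r S u F I → F.card ≤ 6 * r * d ^ 3)
    (fun S hS => exists_small_fan G r d hr hd hminor S hS)
  choose N hNc hN using fun u => exists_hitting G r (6 * r * d ^ 3) hr σ hσ u (hQ u)
  refine ⟨σ, hσ, ?_⟩
  have hpos : 1 ≤ r ^ 2 * d ^ 3 := Nat.one_le_iff_ne_zero.mpr (by positivity)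
  have h2 : 2 ≤ 6 * r ^ 2 * d ^ 3 := by rw [mul_assoc]; omega
  rw [← Nat.geomSum_eq h2]
  refine Finset.sup_le (fun v _ => ?_)
  refine le_trans ?_ (reach_count G r (6 * r ^ 2 * d ^ 3) σ hσ N
    (fun u => (hNc u).trans (le_of_eq (by ring))) hN r le_rfl v)
  rw [← Set.ncard_coe_finset]
  refine Set.ncard_le_ncard ?_ (Set.toFinite _)
  rintro u ⟨huv, p, -, hp, hps⟩
  simp only [Finset.coe_filter, Finset.mem_univ, true_and, Set.mem_setOf_eq]
  refine ⟨p, hp, fun w hw => ?_⟩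
  by_cases h1 : w = v
  · rw [h1]; exact huv
  by_cases h2 : w = u
  · rw [h2]
  exact (hps w hw h1 h2).le
end

section
/- Let h ∈ ℕ and let G be a finite simple graph of treedepth at most h. Then every DFS forest of G has depth strictly smaller than 2^h; in particular, every DFS forest of G is a separation forest of G of depth smaller than 2^h. -/
/-- `A` is (the ancestor relation of) a separation forest of `G`: a partial order in which
the set of ancestors of each node is a finite chain — i.e. a rooted forest, where
`A u v` means "`u` is an ancestor of `v`" (every node being its own ancestor) —
such that every edge of `G` joins an ancestor to its descendant. -/
structure IsSepForest {V : Type} (G : SimpleGraph V) (A : V → V → Prop) : Prop where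
  refl : ∀ v, A v v
  antisymm : ∀ u v, A u v → A v u → u = v
  trans : ∀ u v w, A u v → A v w → A u w
  chain : ∀ v u w, A u v → A w v → A u w ∨ A w u
  finite : ∀ v, {u | A u v}.Finite
  sep : ∀ u v, G.Adj u v → A u v ∨ A v u

/-- The depth of a node `v` in a rooted forest with ancestor relation `A` is its number of
ancestors; the depth of the forest is the maximum depth of a node.
The treedepth of `G` is the minimum depth of a separation forest of `G`. -/
noncomputable def treedepth {V : Type} (G : SimpleGraph V) : ℕ :=
  sInf {h | ∃ A : V → V → Prop, IsSepForest G A ∧ ∀ v, {u | A u v}.ncard ≤ h}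

/-- In a rooted forest with ancestor relation `A`, `u` is the parent of `v` if `u` is a
strict ancestor of `v` and every strict ancestor of `v` is an ancestor of `u`. -/
def IsParent {V : Type} (A : V → V → Prop) (u v : V) : Prop :=
  A u v ∧ u ≠ v ∧ ∀ w, A w v → w ≠ v → A w u

/-- `A` is (the ancestor relation of) a DFS forest of `G`: a rooted forest on the vertex set
of `G` such that every edge of `G` joins an ancestor to its descendant, and whenever `u` is
the parent of `v`, `uv` is an edge of `G`. -/
def IsDFSForest {V : Type} (G : SimpleGraph V) (A : V → V → Prop) : Prop :=
  IsSepForest G A ∧ ∀ u v, IsParent A u v → G.Adj u v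

theorem list_root {V : Type} {G : SimpleGraph V} {B : V → V → Prop} (hB : IsSepForest G B) :
    ∀ (l : List V), l ≠ [] → l.IsChain G.Adj → ∃ r ∈ l, ∀ x ∈ l, B r x := by
  intro l
  induction l with
  | nil => intro h; exact absurd rfl h
  | cons a t ih =>
    intro _ hc
    cases t with
    | nil => exact ⟨a, by simp, by simpa using hB.refl a⟩
    | cons b t =>
      rw [List.isChain_cons_cons] at hc
      obtain ⟨r, hr, hx⟩ := ih (by simp) hc.2
      have hrb := hx b (by simp)
      have key : B r a ∨ B a r := by
        rcases hB.sep a b hc.1 with h | h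
        · exact (hB.chain b r a hrb h)
        · exact Or.inl (hB.trans _ _ _ hrb h)
      rcases key with h | h
      · refine ⟨r, List.mem_cons_of_mem _ hr, fun x hxm => ?_⟩
        rcases List.mem_cons.1 hxm with rfl | h'
        · exact h
        · exact hx x h'
      · refine ⟨a, by simp, fun x hxm => ?_⟩
        rcases List.mem_cons.1 hxm with rfl | h'
        · exact hB.refl _
        · exact hB.trans _ _ _ h (hx x h')

theorem list_bound {V : Type} {G : SimpleGraph V} {B : V → V → Prop} (hB : IsSepForest G B) :
    ∀ (h : ℕ) (l : List V), l.IsChain G.Adj → l.Nodup →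
      (∀ x ∈ l, {u | u ∈ l ∧ B u x}.ncard ≤ h) → l.length < 2 ^ h := by
  have fin : ∀ (l : List V) (x : V), {u | u ∈ l ∧ B u x}.Finite := fun l x =>
    (hB.finite x).subset (fun u hu => hu.2)
  intro h
  induction h with
  | zero =>
    intro l _ _ hx
    cases l with
    | nil => simp
    | cons a t =>
      have h1 := hx a (by simp)
      rw [Nat.le_zero, Set.ncard_eq_zero (fin _ _)] at h1
      have : a ∈ {u | u ∈ a :: t ∧ B u a} := ⟨by simp, hB.refl a⟩
      rw [h1] at this
      exact this.elim
  | succ h ih =>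
    intro l hc hn hx
    by_cases hl : l = []
    · subst hl; simp
    obtain ⟨r, hr, hroot⟩ := list_root hB l hl hc
    obtain ⟨s, t, rfl⟩ := List.append_of_mem hr
    have sub : ∀ m : List V, (∀ x ∈ m, x ∈ s ++ r :: t) → r ∉ m →
        ∀ x ∈ m, {u | u ∈ m ∧ B u x}.ncard ≤ h := by
      intro m hm hrm x hxm
      have h1 := hx x (hm x hxm)
      have h2 : {u | u ∈ m ∧ B u x}.ncard < {u | u ∈ s ++ r :: t ∧ B u x}.ncard := by
        apply Set.ncard_lt_ncard _ (fin _ _)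
        refine ⟨fun u hu => ⟨hm u hu.1, hu.2⟩, fun hh => hrm ?_⟩
        exact (hh (show r ∈ _ from ⟨hr, hroot x (hm x hxm)⟩)).1
      omega
    rw [List.isChain_append] at hc
    have hn' := hn
    rw [List.nodup_append] at hn
    obtain ⟨hn1, hn2, hn3⟩ := hn
    rw [List.nodup_cons] at hn2
    have a1 := ih s hc.1 hn1 (sub s (by simp +contextual)
      (fun hrs => hn3 r hrs r (by simp) rfl))
    have a2 := ih t hc.2.1.tail hn2.2 (sub t (by simp +contextual) hn2.1)
    simp only [List.length_append, List.length_cons, pow_succ]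
    omega

theorem anc_list {V : Type} {G : SimpleGraph V} {A : V → V → Prop} (hA : IsDFSForest G A) :
    ∀ (n : ℕ) (v : V), {u | A u v}.ncard = n →
      ∃ t : List V, (v :: t).IsChain G.Adj ∧ (v :: t).Nodup ∧ ∀ u, u ∈ v :: t ↔ A u v := by
  obtain ⟨hA, hp⟩ := hA
  intro n
  induction n using Nat.strong_induction_on with
  | _ n ih =>
  intro v hv
  have lt : ∀ a b, A a b → a ≠ b → {u | A u a}.ncard < {u | A u b}.ncard := by
    intro a b hab hne
    apply Set.ncard_lt_ncard _ (hA.finite _)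
    refine ⟨fun u hu => hA.trans _ _ _ hu hab, fun hh => hne ?_⟩
    exact hA.antisymm _ _ hab (hh (show b ∈ {u | A u b} from hA.refl b))
  by_cases hs : ∃ u, A u v ∧ u ≠ v
  · have hf : {u | A u v ∧ u ≠ v}.Finite := (hA.finite v).subset (fun u hu => hu.1)
    obtain ⟨p, hpm, hmax⟩ := Set.exists_max_image _ (fun u => {w | A w u}.ncard) hf hs
    have hpar : IsParent A p v := by
      refine ⟨hpm.1, hpm.2, fun w hw hne => ?_⟩
      rcases hA.chain v w p hw hpm.1 with h | h
      · exact h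
      · by_cases e : p = w
        · subst e; exact h
        · have h1 := lt p w h e
          have h2 := hmax w ⟨hw, hne⟩
          omega
    obtain ⟨t, h1, h2, h3⟩ := ih _ (hv ▸ lt p v hpm.1 hpm.2) p rfl
    refine ⟨p :: t, ?_, ?_, ?_⟩
    · rw [List.isChain_cons_cons]
      exact ⟨(hp p v hpar).symm, h1⟩
    · rw [List.nodup_cons]
      refine ⟨fun hm => hpm.2 ?_, h2⟩
      exact hA.antisymm _ _ hpm.1 ((h3 v).1 hm)
    · intro u
      rw [List.mem_cons, h3]
      constructor
      · rintro (rfl | h)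
        · exact hA.refl _
        · exact hA.trans _ _ _ h hpm.1
      · intro h
        by_cases e : u = v
        · exact Or.inl e
        · exact Or.inr (hpar.2.2 u h e)
  · push Not at hs
    refine ⟨[], by simp, by simp, fun u => ?_⟩
    constructor
    · intro h
      rw [List.mem_singleton] at h
      subst h; exact hA.refl _
    · intro h
      simpa using hs u h

/-- Every DFS forest of a graph of treedepth at most `h` has depth strictly smaller
than `2^h` (every node has fewer than `2^h` ancestors); in particular it is a separation
forest of `G` of depth smaller than `2^h`. -/
theorem stmt13 {V : Type} [Fintype V] (G : SimpleGraph V) (h : ℕ) (htd : treedepth G ≤ h)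
    (A : V → V → Prop) (hA : IsDFSForest G A) :
    ∀ v : V, {u | A u v}.ncard < 2 ^ h := by
  classical
  intro v
  have hne : {h | ∃ B : V → V → Prop, IsSepForest G B ∧ ∀ v, {u | B u v}.ncard ≤ h}.Nonempty :=
    ⟨Fintype.card V, A, hA.1, fun v => by
      rw [← Nat.card_eq_fintype_card]; exact Set.ncard_le_card _⟩
  obtain ⟨B, hB, hd⟩ := Nat.sInf_mem hne
  obtain ⟨t, h1, h2, h3⟩ := anc_list hA _ v rfl
  have e : {u | A u v} = ((v :: t).toFinset : Set V) := by
    ext u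
    rw [Finset.mem_coe, List.mem_toFinset, h3]
    rfl
  rw [e, Set.ncard_coe_finset, List.toFinset_card_of_nodup h2]
  refine list_bound hB h _ h1 h2 fun x _ => ?_
  exact (Set.ncard_le_ncard (fun u hu => hu.2) (hB.finite x)).trans ((hd x).trans htd)
end
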